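/- arXiv:1109.2229 — 9 statements merged into one kernel-verified Lean document; each statement's English description precedes it below -/
import Mathlib

section
/- For every finite domain X, every database D over X, every finite class C of counting queries over X with |C| ≥ 3, and every α with 0 < α < 1, there exists a database D' over X of size m = ⌈ln|C| / α²⌉ such that max_{Q ∈ C} |Q(D) − Q(D')| ≤ α. -/
attribute [local instance] Classical.propDecidable

/-- The counting query determined by a predicate `φ : X → Bool`, evaluated on a database
(a multiset over `X`): the fraction of elements of the database satisfying `φ`. -/
noncomputable def cquery {X : Type*} (φ : X → Bool) (D : Multiset X) : ℝ :=
  ((D.filter (fun x => φ x = true)).card : ℝ) / (D.card : ℝ)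

/-! Draw `m` elements of `D` independently with replacement. For a fixed query, Hoeffding's
inequality bounds the probability that the sample is off by `α` or more by
`2 * exp (-2 * m * α ^ 2)`. Since `m * α ^ 2 ≥ log |C|`, the union bound leaves a total failure
probability of at most `2 * |C| / |C| ^ 2 < 1`, so some sample is accurate for every
query in `C` simultaneously. -/

open MeasureTheory ProbabilityTheory Real
open scoped NNReal

section Concentration

variable {Ω : Type*} [MeasurableSpace Ω] {μ : Measure Ω}

lemma measureReal_le_abs_le_of_hasSubgaussianMGF {Y : Ω → ℝ} {c : ℝ≥0} {ε : ℝ}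
    (hY : HasSubgaussianMGF Y c μ) (hε : 0 ≤ ε) :
    μ.real {ω | ε ≤ |Y ω|} ≤ 2 * exp (-ε ^ 2 / (2 * c)) := by
  calc μ.real {ω | ε ≤ |Y ω|}
      = μ.real ({ω | ε ≤ Y ω} ∪ {ω | ε ≤ (-Y) ω}) := by
        simp only [le_abs, Set.ofPred_or, Pi.neg_apply]
    _ ≤ μ.real {ω | ε ≤ Y ω} + μ.real {ω | ε ≤ (-Y) ω} := measureReal_union_le _ _
    _ ≤ exp (-ε ^ 2 / (2 * c)) + exp (-ε ^ 2 / (2 * c)) :=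
        add_le_add (hY.measure_ge_le hε) (hY.neg.measure_ge_le hε)
    _ = 2 * exp (-ε ^ 2 / (2 * c)) := (two_mul _).symm

lemma exists_forall_notMem_of_sum_measureReal_lt_one [IsProbabilityMeasure μ] {κ : Type*}
    {s : Finset κ} {A : κ → Set Ω} (hA : ∑ j ∈ s, μ.real (A j) < 1) :
    ∃ ω, ∀ j ∈ s, ω ∉ A j := by
  have hlt : μ.real (⋃ j ∈ s, A j) < 1 := (measureReal_biUnion_finset_le s A).trans_lt hA
  have hne : ⋃ j ∈ s, A j ≠ Set.univ := by
    intro h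
    simp [h] at hlt
  simpa using (Set.ne_univ_iff_exists_notMem _).1 hne

variable [IsProbabilityMeasure μ] {ι : Type*} [Fintype ι] {a b ε : ℝ}

lemma hasSubgaussianMGF_pi_sum_sub_integral {f : Ω → ℝ} (hf : AEMeasurable f μ)
    (hfab : ∀ᵐ x ∂μ, f x ∈ Set.Icc a b) :
    HasSubgaussianMGF (fun ω : ι → Ω ↦ ∑ i, (f (ω i) - ∫ x, f x ∂μ))
      (Fintype.card ι * (‖b - a‖₊ / 2) ^ 2) (Measure.pi fun _ ↦ μ) := by
  have hindep : iIndepFun (fun (i : ι) (ω : ι → Ω) ↦ f (ω i) - ∫ x, f x ∂μ)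
      (Measure.pi fun _ ↦ μ) :=
    iIndepFun_pi fun _ ↦ hf.sub_const _
  have hsubG (i : ι) : HasSubgaussianMGF (fun ω : ι → Ω ↦ f (ω i) - ∫ x, f x ∂μ)
      ((‖b - a‖₊ / 2) ^ 2) (Measure.pi fun _ ↦ μ) := by
    refine HasSubgaussianMGF.of_map (X := fun x ↦ f x - ∫ x, f x ∂μ)
      (measurable_pi_apply i).aemeasurable ?_
    rw [(measurePreserving_eval (fun _ ↦ μ) i).map_eq]
    exact hasSubgaussianMGF_of_mem_Icc hf hfab
  simpa using HasSubgaussianMGF.sum_of_iIndepFun hindep (s := .univ) fun i _ ↦ hsubG i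

lemma measureReal_pi_le_abs_mean_sub_integral_le {f : Ω → ℝ} (hf : AEMeasurable f μ)
    (hfab : ∀ᵐ x ∂μ, f x ∈ Set.Icc a b) (hε : 0 ≤ ε) :
    (Measure.pi fun _ : ι ↦ μ).real
        {ω | ε ≤ |(∑ i, f (ω i)) / Fintype.card ι - ∫ x, f x ∂μ|} ≤
      2 * exp (-(2 * Fintype.card ι * ε ^ 2 / (b - a) ^ 2)) := by
  rcases isEmpty_or_nonempty ι with _ | _
  · exact measureReal_le_one.trans (by simp)
  have hn : (0 : ℝ) < Fintype.card ι := mod_cast Fintype.card_pos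
  have hscale (ω : ι → Ω) : ε ≤ |(∑ i, f (ω i)) / Fintype.card ι - ∫ x, f x ∂μ| ↔
      Fintype.card ι * ε ≤ |∑ i, (f (ω i) - ∫ x, f x ∂μ)| := by
    have hsum : ∑ i, (f (ω i) - ∫ x, f x ∂μ) =
        Fintype.card ι * ((∑ i, f (ω i)) / Fintype.card ι - ∫ x, f x ∂μ) := by
      rw [Finset.sum_sub_distrib, Finset.sum_const, Finset.card_univ, nsmul_eq_mul]
      field_simp
    rw [hsum, abs_mul, abs_of_pos hn, mul_le_mul_iff_right₀ hn]
  simp only [hscale]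
  refine (measureReal_le_abs_le_of_hasSubgaussianMGF
    (hasSubgaussianMGF_pi_sum_sub_integral hf hfab) (by positivity)).trans_eq ?_
  congr 2
  push_cast
  rw [norm_eq_abs, div_pow, sq_abs]
  field_simp

lemma exists_forall_abs_mean_sub_integral_lt {κ : Type*} (s : Finset κ) {f : κ → Ω → ℝ}
    (hf : ∀ j ∈ s, AEMeasurable (f j) μ) (hfab : ∀ j ∈ s, ∀ᵐ x ∂μ, f j x ∈ Set.Icc a b)
    (hε : 0 ≤ ε)
    (hs : s.card * (2 * exp (-(2 * Fintype.card ι * ε ^ 2 / (b - a) ^ 2))) < 1) :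
    ∃ ω : ι → Ω, ∀ j ∈ s, |(∑ i, f j (ω i)) / Fintype.card ι - ∫ x, f j x ∂μ| < ε := by
  have hsum := Finset.sum_le_card_nsmul s _ _ fun j hj ↦
    measureReal_pi_le_abs_mean_sub_integral_le (ι := ι) (hf j hj) (hfab j hj) hε
  rw [nsmul_eq_mul] at hsum
  simpa using exists_forall_notMem_of_sum_measureReal_lt_one (hsum.trans_lt hs)

end Concentration

section Queries

variable {X : Type*}

/-- The linear query with weight function `f`: the average of `f` over the elements of the database
`D`, counted with multiplicity. Counting queries are the case of `0`-`1`-valued weights. -/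
noncomputable def linearQuery (f : X → ℝ) (D : Multiset X) : ℝ :=
  (D.map f).sum / D.card

lemma cquery_eq_linearQuery (φ : X → Bool) (D : Multiset X) :
    cquery φ D = linearQuery (fun x ↦ (φ x).toNat) D := by
  have hcard :
      ((D.filter fun x ↦ φ x = true).card : ℝ) = (D.map fun x ↦ ((φ x).toNat : ℝ)).sum := by
    induction D using Multiset.induction_on with
    | empty => simp
    | cons x D ih => cases h : φ x <;> simp [h, ih, add_comm]
  rw [cquery, linearQuery, hcard]

lemma linearQuery_map_univ {ι : Type*} [Fintype ι] (f : X → ℝ) (ω : ι → X) :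
    linearQuery f (Finset.univ.val.map ω) = (∑ i, f (ω i)) / Fintype.card ι := by
  simp [linearQuery]

lemma ae_ofMultiset_mem [MeasurableSpace X] [MeasurableSingletonClass X] {D : Multiset X}
    (hD : D ≠ 0) : ∀ᵐ x ∂(PMF.ofMultiset D hD).toMeasure, x ∈ D := by
  rw [← PMF.restrict_toMeasure_support]
  filter_upwards [ae_restrict_mem (PMF.support_countable _).measurableSet] with x hx
  simpa using hx

lemma integral_ofMultiset [MeasurableSpace X] [MeasurableSingletonClass X] {D : Multiset X}
    (hD : D ≠ 0) (f : X → ℝ) :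
    ∫ x, f x ∂(PMF.ofMultiset D hD).toMeasure = linearQuery f D := by
  have hrestrict := PMF.restrict_toMeasure_support (PMF.ofMultiset D hD)
  rw [PMF.support_ofMultiset] at hrestrict
  calc ∫ x, f x ∂(PMF.ofMultiset D hD).toMeasure
      = ∫ x in D.toFinset, f x ∂(PMF.ofMultiset D hD).toMeasure := by rw [hrestrict]
    _ = ∑ x ∈ D.toFinset, (PMF.ofMultiset D hD).toMeasure.real {x} • f x :=
        setIntegral_finset _ .finset
    _ = ∑ x ∈ D.toFinset, D.count x • f x / D.card := by
        refine Finset.sum_congr rfl fun x _ ↦ ?_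
        rw [measureReal_def, PMF.toMeasure_apply_singleton _ _ (measurableSet_singleton x),
          PMF.ofMultiset_apply, ENNReal.toReal_div, ENNReal.toReal_natCast, ENNReal.toReal_natCast,
          smul_eq_mul, nsmul_eq_mul, div_mul_eq_mul_div]
    _ = linearQuery f D := by
        rw [linearQuery, Finset.sum_multiset_map_count, Finset.sum_div]

theorem stmt0_general {κ : Type*} {D : Multiset X} (hD : D ≠ 0) (s : Finset κ) {f : κ → X → ℝ}
    {a b α : ℝ} {m : ℕ} (hf : ∀ j ∈ s, ∀ x ∈ D, f j x ∈ Set.Icc a b) (hα : 0 ≤ α)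
    (hm : s.card * (2 * exp (-(2 * m * α ^ 2 / (b - a) ^ 2))) < 1) :
    ∃ D' : Multiset X, D'.card = m ∧
      ∀ j ∈ s, |linearQuery (f j) D - linearQuery (f j) D'| < α := by
  let _ : MeasurableSpace X := ⊤
  obtain ⟨ω, hω⟩ := exists_forall_abs_mean_sub_integral_lt (ι := Fin m)
    (μ := (PMF.ofMultiset D hD).toMeasure) s (fun _ _ ↦ measurable_from_top.aemeasurable)
    (fun j hj ↦ (ae_ofMultiset_mem hD).mono (hf j hj)) hα (by simpa using hm)
  refine ⟨Finset.univ.val.map ω, by simp, fun j hj ↦ ?_⟩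
  rw [abs_sub_comm, linearQuery_map_univ, ← integral_ofMultiset hD]
  exact hω j hj

end Queries

lemma mul_two_mul_exp_neg_lt_one {N m α : ℝ} (hN : 2 < N) (hα : α ≠ 0)
    (hm : log N / α ^ 2 ≤ m) : N * (2 * exp (-(2 * m * α ^ 2))) < 1 := by
  have hN0 : 0 < N := two_pos.trans hN
  have hlog : log N ≤ m * α ^ 2 := (div_le_iff₀ (by positivity)).1 hm
  have hexp : exp (-(m * α ^ 2)) ≤ N⁻¹ := by
    rw [exp_neg]
    exact inv_anti₀ hN0 ((log_le_iff_le_exp hN0).1 hlog)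
  calc N * (2 * exp (-(2 * m * α ^ 2)))
      = N * (2 * exp (-(m * α ^ 2)) ^ 2) := by
        rw [← exp_nat_mul]
        ring_nf
    _ ≤ N * (2 * N⁻¹ ^ 2) := by gcongr
    _ = 2 / N := by field_simp
    _ < 1 := (div_lt_one hN0).2 hN

theorem stmt0 {X : Type*} [Fintype X] (D : Multiset X) (hD : D ≠ 0)
    (C : Finset (X → Bool)) (hC : 3 ≤ C.card) (α : ℝ) (hα0 : 0 < α) (hα1 : α < 1) :
    ∃ D' : Multiset X, D'.card = ⌈Real.log (C.card : ℝ) / α ^ 2⌉₊ ∧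
      ∀ φ ∈ C, |cquery φ D - cquery φ D'| ≤ α := by
  obtain ⟨D', hcard, hD'⟩ := stmt0_general (a := 0) (b := 1) hD C
    (fun φ _ x _ ↦ ⟨Nat.cast_nonneg _, mod_cast (φ x).toNat_le⟩) hα0.le
    (by simpa using mul_two_mul_exp_neg_lt_one (mod_cast hC) hα0.ne' (Nat.le_ceil _))
  exact ⟨D', hcard, fun φ hφ ↦ by simpa only [cquery_eq_linearQuery] using (hD' φ hφ).le⟩
end

section
/- For every finite domain X, every finite class C of counting queries over X with |C| ≥ 3, and every α with 0 < α < 1, the set N of all databases over X of size m = ⌈ln|C| / α²⌉ is an α-net for C; consequently the minimum cardinality N_α(C) of an α-net for C satisfies N_α(C) ≤ |X|^{⌈ln|C| / α²⌉}. -/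
attribute [local instance] Classical.propDecidable

/-!
Draw `m` elements independently and uniformly from the given database `D`. By Hoeffding's
inequality a single query is off by `α` or more with probability at most `2 exp (-2 m α ^ 2)`, so
by the union bound some sample is good for all of `C` as soon as `2 |C| < exp (2 m α ^ 2)`. For
`m ≥ log |C| / α ^ 2` the right-hand side is at least `|C| ^ 2`, which exceeds `2 |C|` because
`|C| ≥ 3`.
-/

open MeasureTheory ProbabilityTheory
open scoped BigOperators

section Hoeffding

variable {Ω : Type*} [MeasurableSpace Ω] {μ : Measure Ω} [IsProbabilityMeasure μ]
  {ι : Type*} [Fintype ι]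

theorem measureReal_pi_le_sum_sub_integral_le {g : Ω → ℝ} {a b : ℝ} (hg : AEMeasurable g μ)
    (hab : ∀ᵐ ω ∂μ, g ω ∈ Set.Icc a b) {ε : ℝ} (hε : 0 ≤ ε) :
    (Measure.pi fun _ : ι ↦ μ).real {x | ε ≤ ∑ i, (g (x i) - ∫ ω, g ω ∂μ)} ≤
      Real.exp (-2 * ε ^ 2 / (Fintype.card ι * (b - a) ^ 2)) := by
  have hindep : iIndepFun (fun (i : ι) x ↦ g (x i) - ∫ ω, g ω ∂μ) (Measure.pi fun _ : ι ↦ μ) :=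
    iIndepFun_pi fun _ ↦ hg.sub_const _
  have hsubG (i : ι) : HasSubgaussianMGF (fun x : ι → Ω ↦ g (x i) - ∫ ω, g ω ∂μ)
      ((‖b - a‖₊ / 2) ^ 2) (Measure.pi fun _ : ι ↦ μ) := by
    have heval := measurePreserving_eval (fun _ : ι ↦ μ) i
    refine HasSubgaussianMGF.of_map (X := fun ω ↦ g ω - ∫ ω, g ω ∂μ)
      heval.measurable.aemeasurable ?_
    rw [heval.map_eq]
    exact hasSubgaussianMGF_of_mem_Icc hg hab
  refine (HasSubgaussianMGF.measure_sum_ge_le_of_iIndepFun hindep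
    (fun i _ ↦ hsubG i) hε).trans_eq ?_
  congr 1
  simp only [Finset.sum_const, Finset.card_univ, nsmul_eq_mul, NNReal.coe_mul, NNReal.coe_natCast,
    NNReal.coe_pow, NNReal.coe_div, NNReal.coe_ofNat, coe_nnnorm, Real.norm_eq_abs, div_pow, sq_abs]
  rw [← mul_div_mul_left _ (_ * (b - a) ^ 2) (by norm_num : (1 / 2 : ℝ) ≠ 0)]
  congr 1 <;> ring

theorem measureReal_pi_le_expect_sub_integral_le {g : Ω → ℝ} {a b : ℝ} (hg : AEMeasurable g μ)
    (hab : ∀ᵐ ω ∂μ, g ω ∈ Set.Icc a b) {α : ℝ} (hα : 0 ≤ α) :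
    (Measure.pi fun _ : ι ↦ μ).real {x | α ≤ (𝔼 i, g (x i)) - ∫ ω, g ω ∂μ} ≤
      Real.exp (-2 * Fintype.card ι * α ^ 2 / (b - a) ^ 2) := by
  set n : ℝ := (Fintype.card ι : ℝ) with hn
  have hexp : -2 * (n * α) ^ 2 / (n * (b - a) ^ 2) = -2 * n * α ^ 2 / (b - a) ^ 2 := by
    rcases eq_or_ne n 0 with h | h
    · simp [h]
    · rw [← mul_div_mul_left _ ((b - a) ^ 2) h]
      congr 1
      ring
  have hsum (x : ι → Ω) :
      ∑ i, (g (x i) - ∫ ω, g ω ∂μ) = n * ((𝔼 i, g (x i)) - ∫ ω, g ω ∂μ) := by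
    rw [mul_sub, hn, Fintype.card_mul_expect]
    simp
  rw [← hexp]
  refine le_trans (measureReal_mono fun x hx ↦ ?_)
    (measureReal_pi_le_sum_sub_integral_le hg hab (by positivity : 0 ≤ n * α))
  change n * α ≤ _
  rw [hsum]
  exact mul_le_mul_of_nonneg_left hx (Nat.cast_nonneg _)

theorem measureReal_pi_le_abs_expect_sub_integral_le {g : Ω → ℝ} {a b : ℝ}
    (hg : AEMeasurable g μ) (hab : ∀ᵐ ω ∂μ, g ω ∈ Set.Icc a b) {α : ℝ} (hα : 0 ≤ α) :
    (Measure.pi fun _ : ι ↦ μ).real {x | α ≤ |(𝔼 i, g (x i)) - ∫ ω, g ω ∂μ|} ≤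
      2 * Real.exp (-2 * Fintype.card ι * α ^ 2 / (b - a) ^ 2) := by
  have hupper := measureReal_pi_le_expect_sub_integral_le (ι := ι) hg hab hα
  have hlower := measureReal_pi_le_expect_sub_integral_le (ι := ι) (g := fun ω ↦ -g ω) (a := -b)
    (b := -a) hg.neg (hab.mono fun ω h ↦ ⟨neg_le_neg h.2, neg_le_neg h.1⟩) hα
  rw [neg_sub_neg] at hlower
  simp only [Finset.expect_neg_distrib, integral_neg, ← neg_sub'] at hlower
  simp only [le_abs, Set.ofPred_or, two_mul]
  exact (measureReal_union_le _ _).trans (add_le_add hupper hlower)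

theorem exists_forall_abs_expect_sub_integral_lt {κ : Type*} (s : Finset κ) {g : κ → Ω → ℝ}
    {a b : ℝ} (hg : ∀ k ∈ s, AEMeasurable (g k) μ)
    (hab : ∀ k ∈ s, ∀ᵐ ω ∂μ, g k ω ∈ Set.Icc a b) {α : ℝ} (hα : 0 ≤ α)
    (hs : 2 * (s.card : ℝ) < Real.exp (2 * Fintype.card ι * α ^ 2 / (b - a) ^ 2)) :
    ∃ x : ι → Ω, ∀ k ∈ s, |(𝔼 i, g k (x i)) - ∫ ω, g k ω ∂μ| < α := by
  let P : Measure (ι → Ω) := Measure.pi fun _ ↦ μ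
  let bad (k : κ) : Set (ι → Ω) := {x | α ≤ |(𝔼 i, g k (x i)) - ∫ ω, g k ω ∂μ|}
  have hbad : P.real (⋃ k ∈ s, bad k) < 1 := calc
    P.real (⋃ k ∈ s, bad k) ≤ ∑ k ∈ s, P.real (bad k) := measureReal_biUnion_finset_le s bad
    _ ≤ s.card • (2 * Real.exp (-2 * Fintype.card ι * α ^ 2 / (b - a) ^ 2)) :=
      Finset.sum_le_card_nsmul _ _ _ fun k hk ↦
        measureReal_pi_le_abs_expect_sub_integral_le (hg k hk) (hab k hk) hα
    _ = 2 * s.card / Real.exp (2 * Fintype.card ι * α ^ 2 / (b - a) ^ 2) := by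
      simp only [neg_mul, neg_div]
      rw [Real.exp_neg, nsmul_eq_mul]
      ring
    _ < 1 := (div_lt_one (Real.exp_pos _)).2 hs
  obtain ⟨x, hx⟩ : ∃ x, x ∉ ⋃ k ∈ s, bad k := by
    by_contra! h
    rw [Set.eq_univ_of_forall h, probReal_univ] at hbad
    exact hbad.false
  exact ⟨x, fun k hk ↦ lt_of_not_ge fun h ↦ hx (Set.mem_biUnion hk h)⟩

end Hoeffding

theorem integral_uniformOfFintype {ι : Type*} [Fintype ι] [Nonempty ι] [MeasurableSpace ι]
    [MeasurableSingletonClass ι] (f : ι → ℝ) :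
    ∫ i, f i ∂(PMF.uniformOfFintype ι).toMeasure = 𝔼 i, f i := by
  simp [PMF.integral_eq_sum, ← Finset.mul_sum, Fintype.expect_eq_sum_div_card, div_eq_inv_mul]

section Database

variable {X : Type*}

theorem cquery_map_univ {ι : Type*} [Fintype ι] (φ : X → Bool) (x : ι → X) :
    cquery φ (Finset.univ.val.map x) = 𝔼 i, if φ (x i) = true then (1 : ℝ) else 0 := by
  simp [cquery, Multiset.filter_map, Fintype.expect_eq_sum_div_card, ← Finset.filter_val]

theorem cquery_eq_expect (φ : X → Bool) (D : Multiset X) :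
    cquery φ D = 𝔼 x : D, if φ x = true then (1 : ℝ) else 0 := by
  simpa only [Multiset.map_univ_coe] using cquery_map_univ φ (fun x : D ↦ (x : X))

theorem exists_subset_card_eq_forall_abs_cquery_sub_lt (C : Finset (X → Bool)) {α : ℝ} (hα : 0 ≤ α)
    {m : ℕ} (hm : 2 * (C.card : ℝ) < Real.exp (2 * m * α ^ 2)) {D : Multiset X} (hD : D ≠ 0) :
    ∃ D' ⊆ D, D'.card = m ∧ ∀ φ ∈ C, |cquery φ D - cquery φ D'| < α := by
  let : MeasurableSpace D := ⊤
  obtain ⟨a, ha⟩ := Multiset.exists_mem_of_ne_zero hD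
  have : Nonempty D := ⟨⟨a, 0, Multiset.count_pos.2 ha⟩⟩
  obtain ⟨x, hx⟩ := exists_forall_abs_expect_sub_integral_lt (ι := Fin m)
    (μ := (PMF.uniformOfFintype D).toMeasure) (a := 0) (b := 1) C
    (g := fun φ y ↦ if φ y = true then 1 else 0)
    (fun φ _ ↦ (measurable_of_finite _).aemeasurable)
    (fun φ _ ↦ .of_forall fun y ↦ by split_ifs <;> simp) hα (by simpa using hm)
  refine ⟨Finset.univ.val.map fun i ↦ (x i : X), fun y hy ↦ ?_, by simp, fun φ hφ ↦ ?_⟩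
  · obtain ⟨i, -, rfl⟩ := Multiset.mem_map.1 hy
    exact Multiset.coe_mem
  · rw [cquery_eq_expect, cquery_map_univ, ← integral_uniformOfFintype, abs_sub_comm]
    exact hx φ hφ

/-- The finite set of databases of size `m` over the domain `S`; it is presented as the image of
the tuples in `S ^ m`, which gives the bound on its cardinality. -/
noncomputable def databasesOfCard (S : Finset X) (m : ℕ) : Finset (Multiset X) :=
  (Fintype.piFinset fun _ : Fin m ↦ S).image fun x ↦ Finset.univ.val.map x

theorem mem_databasesOfCard {S : Finset X} {m : ℕ} {D : Multiset X} :
    D ∈ databasesOfCard S m ↔ D.card = m ∧ ∀ x ∈ D, x ∈ S := by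
  simp only [databasesOfCard, Finset.mem_image, Fintype.mem_piFinset]
  constructor
  · rintro ⟨x, hx, rfl⟩
    simpa using hx
  · obtain ⟨l, rfl⟩ : ∃ l : List X, (l : Multiset X) = D := ⟨D.toList, D.coe_toList⟩
    simp only [Multiset.coe_card, Multiset.mem_coe]
    rintro ⟨rfl, hl⟩
    exact ⟨l.get, fun i ↦ hl _ (l.get_mem i), by rw [Fin.univ_val_map, List.ofFn_get]⟩

theorem card_databasesOfCard_le (S : Finset X) (m : ℕ) :
    (databasesOfCard S m).card ≤ S.card ^ m :=
  Finset.card_image_le.trans_eq (Fintype.card_piFinset_const S m)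

end Database

theorem two_mul_lt_exp_two_mul_of_log_div_sq_le {c α t : ℝ} (hc : 2 < c) (hα : 0 < α)
    (ht : Real.log c / α ^ 2 ≤ t) : 2 * c < Real.exp (2 * t * α ^ 2) := by
  have hlog : Real.log c ≤ t * α ^ 2 := (div_le_iff₀ (by positivity)).1 ht
  calc
    2 * c < c ^ 2 := by nlinarith
    _ = Real.exp (2 * Real.log c) := by
      rw [two_mul, Real.exp_add, Real.exp_log (by linarith), sq]
    _ ≤ Real.exp (2 * t * α ^ 2) := Real.exp_le_exp.2 (by linarith)

theorem stmt1_general {X : Type*} (S : Finset X) (C : Finset (X → Bool)) (hC : C.Nonempty)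
    {α : ℝ} (hα : 0 ≤ α) {m : ℕ} (hm : 2 * (C.card : ℝ) < Real.exp (2 * m * α ^ 2)) :
    (∀ D : Multiset X, D ≠ 0 →
      ∃ D' : Multiset X, D'.card = m ∧ ∀ φ ∈ C, |cquery φ D - cquery φ D'| ≤ α) ∧
    (∃ N : Finset (Multiset X), (∀ D' ∈ N, D' ≠ 0) ∧
      (∀ D : Multiset X, D ≠ 0 → (∀ x ∈ D, x ∈ S) →
        ∃ D' ∈ N, ∀ φ ∈ C, |cquery φ D - cquery φ D'| ≤ α) ∧
      N.card ≤ S.card ^ m) := by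
  have hm0 : m ≠ 0 := by
    rintro rfl
    have : (1 : ℝ) ≤ C.card := by exact_mod_cast hC.card_pos
    rw [Nat.cast_zero, mul_zero, zero_mul, Real.exp_zero] at hm
    linarith
  refine ⟨fun D hD ↦ ?_, databasesOfCard S m, ?_, fun D hD hDS ↦ ?_, card_databasesOfCard_le S m⟩
  · obtain ⟨D', -, hcard, hD'⟩ := exists_subset_card_eq_forall_abs_cquery_sub_lt C hα hm hD
    exact ⟨D', hcard, fun φ hφ ↦ (hD' φ hφ).le⟩
  · rintro D' hD' rfl
    exact hm0 (mem_databasesOfCard.1 hD').1.symm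
  · obtain ⟨D', hsub, hcard, hD'⟩ := exists_subset_card_eq_forall_abs_cquery_sub_lt C hα hm hD
    exact ⟨D', mem_databasesOfCard.2 ⟨hcard, fun x hx ↦ hDS x (hsub hx)⟩,
      fun φ hφ ↦ (hD' φ hφ).le⟩

theorem stmt1 {X : Type*} [Fintype X] (C : Finset (X → Bool)) (hC : 3 ≤ C.card)
    (α : ℝ) (hα0 : 0 < α) (hα1 : α < 1) :
    -- the set of all databases of size `m = ⌈ln|C| / α²⌉` is an α-net for C
    (∀ D : Multiset X, D ≠ 0 →
      ∃ D' : Multiset X, D'.card = ⌈Real.log (C.card : ℝ) / α ^ 2⌉₊ ∧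
        ∀ φ ∈ C, |cquery φ D - cquery φ D'| ≤ α) ∧
    -- consequently the minimum cardinality of an α-net is at most |X| ^ m
    (∃ N : Finset (Multiset X), (∀ D' ∈ N, D' ≠ 0) ∧
      (∀ D : Multiset X, D ≠ 0 → ∃ D' ∈ N, ∀ φ ∈ C, |cquery φ D - cquery φ D'| ≤ α) ∧
      N.card ≤ Fintype.card X ^ ⌈Real.log (C.card : ℝ) / α ^ 2⌉₊) := by
  simpa using stmt1_general Finset.univ C (Finset.card_pos.1 (by lia)) hα0.le
    (two_mul_lt_exp_two_mul_of_log_div_sq_le (by exact_mod_cast hC) hα0 (Nat.le_ceil _))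
end

section
/- There is a universal constant c > 0 such that for every finite domain X, every class C of counting queries over X whose class of defining predicates has VC-dimension k ≥ 1, and every α with 0 < α < 1/2, the minimum cardinality N_α(C) of an α-net for C satisfies N_α(C) ≤ |X|^{⌈c · k · ln(1/α) / α²⌉}. -/
attribute [local instance] Classical.propDecidable

/-- A class of predicates `P` shatters a finite set `S` if every subset of `S` is picked out
by some predicate in `P`. -/
def Shatters {X : Type*} (P : Set (X → Bool)) (S : Finset X) : Prop :=
  ∀ T ⊆ S, ∃ φ ∈ P, ∀ x ∈ S, (φ x = true ↔ x ∈ T)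

/-!
Every database is approximated by one with only `m ≈ k log (1 / α) / α ^ 2` elements, and there
are at most `|X| ^ m` of those. The approximating database is a random sample. If every sample of
size `m` were bad for some query, comparing it with an independent ghost sample would force a large
exponential moment of the difference between the two samples' counts. Exchanging sample and ghost
sample coordinatewise at random preserves their distribution and turns that difference into a
signed sum with subgaussian moments, while by Sauer–Shelah only polynomially many signed sums occur
once the `2m` points are fixed.
-/

open Finset hiding Shatters
open Real BigOperators

section Shattering

variable {X ι : Type*} {P : Set (X → Bool)} {w : ι → X} {S : Finset ι} {k : ℕ}

theorem Shatters.injOn_of_comp (hS : Shatters ((· ∘ w) '' P) S) : Set.InjOn w S := by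
  intro i hi j hj hij
  obtain ⟨_, ⟨φ, -, rfl⟩, hφ⟩ := hS {i} (singleton_subset_iff.2 hi)
  have hφj : φ (w j) = true := hij ▸ (hφ i hi).2 (mem_singleton_self i)
  exact (mem_singleton.1 ((hφ j hj).1 hφj)).symm

theorem Shatters.image_of_comp (hS : Shatters ((· ∘ w) '' P) S) : Shatters P (S.image w) := by
  intro T _
  obtain ⟨_, ⟨φ, hφ, rfl⟩, hφT⟩ := hS {i ∈ S | w i ∈ T} (filter_subset _ _)
  refine ⟨φ, hφ, forall_mem_image.2 fun i hi => ?_⟩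
  simpa [hi] using hφT i hi

theorem Shatters.card_le_of_comp (hP : ∀ S : Finset X, Shatters P S → #S ≤ k)
    (hS : Shatters ((· ∘ w) '' P) S) : #S ≤ k :=
  card_image_of_injOn hS.injOn_of_comp ▸ hP _ hS.image_of_comp

theorem shatters_of_finsetShatters_image [Fintype ι] {P : Set (ι → Bool)}
    (hS : (P.toFinset.image fun φ => ({i | φ i = true} : Finset ι)).Shatters S) :
    Shatters P S := by
  intro T hT
  obtain ⟨_, hu, rfl⟩ := hS hT
  obtain ⟨φ, hφ, rfl⟩ := mem_image.1 hu
  exact ⟨φ, Set.mem_toFinset.1 hφ, fun i hi => by simp [hi]⟩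

theorem ncard_le_sum_choose_of_shatters_card_le [Fintype ι] {P : Set (ι → Bool)}
    (hP : ∀ S : Finset ι, Shatters P S → #S ≤ k) :
    P.ncard ≤ ∑ i ∈ range (k + 1), (Fintype.card ι).choose i := by
  set trueSet : (ι → Bool) → Finset ι := fun φ => {i | φ i = true}
  have trueSet_injective : Function.Injective trueSet := fun φ ψ h =>
    funext fun i => Bool.eq_iff_iff.2 (by simpa [trueSet] using congrArg (i ∈ ·) h)
  have vcDim_le : (P.toFinset.image trueSet).vcDim ≤ k :=
    Finset.sup_le fun S hS => hP S (shatters_of_finsetShatters_image (mem_shatterer.1 hS))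
  calc P.ncard = #(P.toFinset.image trueSet) := by
        rw [card_image_of_injective _ trueSet_injective, Set.ncard_eq_toFinset_card']
    _ ≤ #(P.toFinset.image trueSet).shatterer := card_le_card_shatterer _
    _ ≤ ∑ i ∈ Iic (P.toFinset.image trueSet).vcDim, (Fintype.card ι).choose i :=
        card_shatterer_le_sum_vcDim
    _ ≤ ∑ i ∈ range (k + 1), (Fintype.card ι).choose i :=
        sum_le_sum_of_subset fun i hi =>
          mem_range_succ_iff.2 ((mem_Iic.1 hi).trans vcDim_le)

end Shattering

section Averages

variable {ι Y : Type*}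

theorem map_expect_le_of_convexOn {s : Finset ι} {f : ℝ → ℝ} (hf : ConvexOn ℝ Set.univ f)
    (hs : s.Nonempty) (z : ι → ℝ) : f (𝔼 i ∈ s, z i) ≤ 𝔼 i ∈ s, f (z i) := by
  have hcard : (#s : ℝ) ≠ 0 := by exact_mod_cast hs.card_ne_zero
  have jensen := hf.map_sum_le (t := s) (w := fun _ => (#s : ℝ)⁻¹) (p := z)
    (fun _ _ => by positivity) (by simp [hcard]) (fun _ _ => Set.mem_univ _)
  simpa only [smul_eq_mul, inv_mul_eq_div, ← sum_div, ← expect_eq_sum_div_card] using jensen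

theorem convexOn_cosh : ConvexOn ℝ Set.univ cosh := by
  have convexOn_exp_neg : ConvexOn ℝ Set.univ fun x : ℝ => exp (-x) :=
    convexOn_exp.comp_linearMap (-LinearMap.id)
  have cosh_eq_smul : cosh = (2⁻¹ : ℝ) • (exp + fun x => exp (-x)) := by
    ext x
    simp [cosh_eq, inv_mul_eq_div]
  exact cosh_eq_smul ▸ (convexOn_exp.add convexOn_exp_neg).smul (by norm_num)

theorem expect_pi_apply [Fintype ι] [Fintype Y] [Nonempty Y] (f : Y → ℝ) (i : ι) :
    𝔼 y : ι → Y, f (y i) = 𝔼 y, f y := by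
  have sum_apply : ∑ y : ι → Y, f (y i) =
      (Fintype.card Y : ℝ) ^ (Fintype.card ι - 1) * ∑ y, f y := by
    simpa using Fintype.sum_piFinset_apply f univ i
  have card_pow : (Fintype.card Y : ℝ) ^ Fintype.card ι =
      Fintype.card Y ^ (Fintype.card ι - 1) * Fintype.card Y :=
    (pow_sub_one_mul (Fintype.card_pos_iff.2 ⟨i⟩).ne' _).symm
  have hY : (Fintype.card Y : ℝ) ≠ 0 := by exact_mod_cast Fintype.card_ne_zero
  simp only [Fintype.expect_eq_sum_div_card, sum_apply, Fintype.card_fun, Nat.cast_pow,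
    card_pow]
  field_simp

theorem expect_signs_exp [Fintype ι] (t : ι → ℝ) :
    𝔼 ε : ι → ℤˣ, exp (∑ i, ε i * t i) = ∏ i, cosh (t i) := by
  have sum_signs (x : ℝ) : ∑ δ : ℤˣ, exp (δ * x) = 2 * cosh x := by
    rw [UnitsInt.univ, sum_pair (by decide), cosh_eq]
    simp [mul_div_cancel₀]
  calc 𝔼 ε : ι → ℤˣ, exp (∑ i, ε i * t i)
      = (∑ ε : ι → ℤˣ, ∏ i, exp (ε i * t i)) / 2 ^ Fintype.card ι := by
        simp [Fintype.expect_eq_sum_div_card, exp_sum]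
    _ = (∏ i, (2 * cosh (t i))) / 2 ^ Fintype.card ι := by
        simp_rw [← sum_signs, prod_univ_sum, Fintype.piFinset_univ]
    _ = ∏ i, cosh (t i) := by simp [prod_mul_distrib]

theorem expect_signs_cosh_le [Fintype ι] (t : ι → ℝ) :
    𝔼 ε : ι → ℤˣ, cosh (∑ i, ε i * t i) ≤ exp ((∑ i, t i ^ 2) / 2) := by
  calc 𝔼 ε : ι → ℤˣ, cosh (∑ i, ε i * t i)
      = (𝔼 ε : ι → ℤˣ, exp (∑ i, ε i * t i) + 𝔼 ε : ι → ℤˣ, exp (∑ i, ε i * -t i)) / 2 := by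
        simp only [cosh_eq, ← expect_div, expect_add_distrib, mul_neg, sum_neg_distrib]
    _ = ∏ i, cosh (t i) := by simp only [expect_signs_exp, cosh_neg, add_self_div_two]
    _ ≤ ∏ i, exp (t i ^ 2 / 2) :=
        prod_le_prod (fun i _ => (cosh_pos _).le) fun i _ => cosh_le_exp_half_sq (t i)
    _ = exp ((∑ i, t i ^ 2) / 2) := by rw [← exp_sum, sum_div]

end Averages

section Symmetrization

variable {ι Y : Type*}

/-- The double sample obtained from `z` by exchanging its two entries at each index where the
sign is `-1`: the measure-preserving symmetry behind symmetrization. -/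
def swapAt (ε : ι → ℤˣ) (z : (ι → Y) × (ι → Y)) : (ι → Y) × (ι → Y) :=
  (fun i => if ε i = 1 then z.1 i else z.2 i, fun i => if ε i = 1 then z.2 i else z.1 i)

theorem swapAt_involutive (ε : ι → ℤˣ) : Function.Involutive (swapAt (Y := Y) ε) := by
  intro z
  ext i <;> by_cases h : ε i = 1 <;> simp [swapAt, h]

variable [Fintype ι]

/-- The sum of `f` over the second half of the double sample `z` minus its sum over the first
half: the deviation whose exponential moments are bounded by symmetrization. -/
def sampleGap (f : Y → ℝ) (z : (ι → Y) × (ι → Y)) : ℝ :=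
  ∑ i, (f (z.2 i) - f (z.1 i))

theorem sampleGap_swapAt (f : Y → ℝ) (ε : ι → ℤˣ) (z : (ι → Y) × (ι → Y)) :
    sampleGap f (swapAt ε z) = ∑ i, ε i * (f (z.2 i) - f (z.1 i)) := by
  refine sum_congr rfl fun i _ => ?_
  rcases Int.units_eq_one_or (ε i) with h | h <;> simp [swapAt, h]

variable {F : Set (Y → ℝ)} {N : ℕ}

theorem expect_cosh_sampleGap_swapAt_le (hF : ∀ f ∈ F, ∀ y y', |f y - f y'| ≤ 1)
    (z : (ι → Y) × (ι → Y)) (hN : ((· ∘ Sum.elim z.1 z.2) '' F).encard ≤ N) (a : ℝ)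
    {f : (ι → ℤˣ) → Y → ℝ} (hf : ∀ ε, f ε ∈ F) :
    𝔼 ε, cosh (a * sampleGap (f ε) (swapAt ε z)) ≤ N * exp (a ^ 2 * Fintype.card ι / 2) := by
  set T := (Set.finite_of_encard_le_coe hN).toFinset with hT
  set δ : (ι ⊕ ι → ℝ) → ι → ℝ := fun t i => t (Sum.inr i) - t (Sum.inl i)
  have le_sum (ε : ι → ℤˣ) : cosh (a * sampleGap (f ε) (swapAt ε z)) ≤
      ∑ t ∈ T, cosh (∑ i, ε i * (a * δ t i)) := by
    have hmem : f ε ∘ Sum.elim z.1 z.2 ∈ T := by simpa [hT] using ⟨_, hf ε, rfl⟩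
    have gap_eq : a * sampleGap (f ε) (swapAt ε z) =
        ∑ i, ε i * (a * δ (f ε ∘ Sum.elim z.1 z.2) i) := by
      rw [sampleGap_swapAt, mul_sum]
      exact sum_congr rfl fun _ _ => mul_left_comm _ _ _
    rw [gap_eq]
    exact single_le_sum (f := fun t => cosh (∑ i, ε i * (a * δ t i)))
      (fun _ _ => (cosh_pos _).le) hmem
  have sum_sq_le : ∀ t ∈ T, ∑ i, (a * δ t i) ^ 2 ≤ a ^ 2 * Fintype.card ι := by
    intro t ht
    obtain ⟨g, hg, rfl⟩ : t ∈ (· ∘ Sum.elim z.1 z.2) '' F := by simpa [hT] using ht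
    simp only [mul_pow, ← mul_sum]
    gcongr
    have sq_le_one (i : ι) : δ (g ∘ Sum.elim z.1 z.2) i ^ 2 ≤ 1 :=
      (sq_le_one_iff_abs_le_one _).2 (hF g hg (z.2 i) (z.1 i))
    simpa using sum_le_card_nsmul univ _ 1 fun i _ => sq_le_one i
  calc 𝔼 ε, cosh (a * sampleGap (f ε) (swapAt ε z))
      ≤ 𝔼 ε : ι → ℤˣ, ∑ t ∈ T, cosh (∑ i, ε i * (a * δ t i)) :=
        expect_le_expect fun ε _ => le_sum ε
    _ = ∑ t ∈ T, 𝔼 ε : ι → ℤˣ, cosh (∑ i, ε i * (a * δ t i)) := expect_sum_comm _ _ _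
    _ ≤ ∑ t ∈ T, exp (a ^ 2 * Fintype.card ι / 2) :=
        sum_le_sum fun t ht => (expect_signs_cosh_le _).trans <| by gcongr; exact sum_sq_le t ht
    _ = #T * exp (a ^ 2 * Fintype.card ι / 2) := by simp
    _ ≤ N * exp (a ^ 2 * Fintype.card ι / 2) := by
        gcongr
        rw [Set.Finite.encard_eq_coe_toFinset_card (Set.finite_of_encard_le_coe hN)] at hN
        exact_mod_cast hN

variable [Fintype Y]

theorem expect_expect_swapAt (G : (ι → Y) × (ι → Y) → ℝ) :
    𝔼 z, 𝔼 ε, G (swapAt ε z) = 𝔼 z, G z := by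
  rw [expect_comm]
  have swapAt_invariant (ε : ι → ℤˣ) : 𝔼 z, G (swapAt ε z) = 𝔼 z, G z :=
    Fintype.expect_bijective _ (swapAt_involutive ε).bijective _ _ fun _ => rfl
  simp only [swapAt_invariant, Fintype.expect_const]

theorem expect_sampleGap [Nonempty Y] (f : Y → ℝ) (x : ι → Y) :
    𝔼 y, sampleGap f (x, y) = Fintype.card ι * (𝔼 y, f y - 𝔼 i, f (x i)) := by
  simp only [sampleGap, expect_sum_comm, expect_sub_distrib, expect_pi_apply, Fintype.expect_const,
    sum_sub_distrib, mul_sub, Fintype.card_mul_expect, sum_const, card_univ, nsmul_eq_mul]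

theorem cosh_le_expect_cosh_sampleGap [Nonempty Y] (f : Y → ℝ) (x : ι → Y) (a : ℝ) :
    cosh (a * (Fintype.card ι * (𝔼 y, f y - 𝔼 i, f (x i)))) ≤
      𝔼 y, cosh (a * sampleGap f (x, y)) := by
  rw [← expect_sampleGap, mul_expect]
  exact map_expect_le_of_convexOn convexOn_cosh univ_nonempty _

theorem expect_cosh_sampleGap_le [Nonempty Y] (hF : ∀ f ∈ F, ∀ y y', |f y - f y'| ≤ 1)
    (hN : ∀ w : ι ⊕ ι → Y, ((· ∘ w) '' F).encard ≤ N) (a : ℝ)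
    {f : (ι → Y) × (ι → Y) → Y → ℝ} (hf : ∀ z, f z ∈ F) :
    𝔼 z, cosh (a * sampleGap (f z) z) ≤ N * exp (a ^ 2 * Fintype.card ι / 2) := by
  rw [← expect_expect_swapAt]
  exact expect_le univ_nonempty fun z _ =>
    expect_cosh_sampleGap_swapAt_le hF z (hN _) a fun ε => hf (swapAt ε z)

theorem exists_forall_abs_expect_sub_expect_le [Nonempty Y]
    (hF : ∀ f ∈ F, ∀ y y', |f y - f y'| ≤ 1)
    (hN : ∀ w : ι ⊕ ι → Y, ((· ∘ w) '' F).encard ≤ N) {a : ℝ} (ha : 0 ≤ a)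
    (hNa : 2 * N ≤ exp (a ^ 2 * Fintype.card ι / 2)) :
    ∃ x : ι → Y, ∀ f ∈ F, |𝔼 y, f y - 𝔼 i, f (x i)| ≤ a := by
  by_contra! h
  choose f hf hfa using h
  set E := exp (a ^ 2 * Fintype.card ι / 2)
  have lt_expect_cosh (x : ι → Y) : E ^ 2 / 2 < 𝔼 y, cosh (a * sampleGap (f x) (x, y)) :=
    calc E ^ 2 / 2 = exp (a * (Fintype.card ι * a)) / 2 := by
          rw [← exp_nat_mul]; push_cast; ring_nf
      _ < cosh (a * (Fintype.card ι * a)) := by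
          rw [cosh_eq]; linarith [exp_pos (-(a * (Fintype.card ι * a)))]
      _ ≤ cosh (a * (Fintype.card ι * (𝔼 y, f x y - 𝔼 i, f x (x i)))) := by
          rw [cosh_le_cosh]
          simp only [abs_mul, abs_of_nonneg ha, Nat.abs_cast]
          gcongr
          exact (hfa x).le
      _ ≤ 𝔼 y, cosh (a * sampleGap (f x) (x, y)) := cosh_le_expect_cosh_sampleGap _ _ _
  have lt_growth : E ^ 2 / 2 < N * E :=
    calc E ^ 2 / 2 < 𝔼 x, 𝔼 y, cosh (a * sampleGap (f x) (x, y)) :=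
          lt_expect (fun x _ => (lt_expect_cosh x).le)
            ⟨Classical.arbitrary _, mem_univ _, lt_expect_cosh _⟩
      _ = 𝔼 z : (ι → Y) × (ι → Y), cosh (a * sampleGap (f z.1) z) := by
          rw [← univ_product_univ, expect_product]
      _ ≤ N * E := expect_cosh_sampleGap_le hF hN a fun z => hf z.1
  nlinarith [exp_pos (a ^ 2 * Fintype.card ι / 2)]

end Symmetrization

section GrowthBound

theorem sum_choose_mul_pow_le (n k : ℕ) {t : ℝ} (ht₀ : 0 ≤ t) (ht₁ : t ≤ 1) :
    (∑ i ∈ range (k + 1), (n.choose i : ℝ)) * t ^ k ≤ (1 + t) ^ n := by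
  calc (∑ i ∈ range (k + 1), (n.choose i : ℝ)) * t ^ k
      ≤ ∑ i ∈ range (k + 1), (n.choose i : ℝ) * t ^ i := by
        rw [sum_mul]
        refine sum_le_sum fun i hi => ?_
        gcongr ?_ * ?_
        exact pow_le_pow_of_le_one ht₀ ht₁ (mem_range_succ_iff.1 hi)
    _ ≤ ∑ i ∈ range (n + 1), (n.choose i : ℝ) * t ^ i := by
        rw [← sum_filter_ne_zero]
        refine sum_le_sum_of_subset_of_nonneg (fun i hi => ?_) fun i _ _ => by positivity
        contrapose! hi
        simp_all [Nat.choose_eq_zero_of_lt]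
    _ = (1 + t) ^ n := by
        simp only [add_comm 1 t, add_pow, one_pow, mul_one, mul_comm]

theorem two_mul_sum_choose_le_exp {k m : ℕ} (hk : 1 ≤ k) {α : ℝ} (hα₀ : 0 < α)
    (hα₁ : α ≤ 1 / 2) (hm : 24 * k * log (1 / α) / α ^ 2 ≤ m) :
    2 * ((∑ i ∈ range (k + 1), (m + m).choose i : ℕ) : ℝ) ≤ exp (α ^ 2 * m / 2) := by
  -- The growth sum is at most `t⁻ᵏ (1 + t) ^ (2m)` for `t ≤ 1`. The choice `t = α ^ 2 / 8` makes
  -- the second factor at most `exp (α ^ 2 m / 4)`, and `24` lets the remaining `exp (α ^ 2 m / 4)`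
  -- absorb `2 t⁻ᵏ ≤ (1 / α) ^ (6k)`.
  push_cast
  have ht : 0 < α ^ 2 / 8 := by positivity
  have sum_mul_le : (∑ i ∈ range (k + 1), ((m + m).choose i : ℝ)) * (α ^ 2 / 8) ^ k ≤
      exp (α ^ 2 * m / 4) :=
    calc _ ≤ (1 + α ^ 2 / 8) ^ (m + m) := sum_choose_mul_pow_le _ _ ht.le (by nlinarith)
      _ ≤ exp (α ^ 2 / 8) ^ (m + m) := by
          gcongr
          linarith [add_one_le_exp (α ^ 2 / 8)]
      _ = exp (α ^ 2 * m / 4) := by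
          rw [← exp_nat_mul]
          push_cast
          ring_nf
  have two_le : 2 ≤ exp (α ^ 2 * m / 4) * (α ^ 2 / 8) ^ k :=
    calc (2 : ℝ) ≤ 2 ^ k := le_self_pow₀ one_le_two (by omega)
      _ ≤ ((1 / α) ^ 6 * (α ^ 2 / 8)) ^ k := by
          gcongr
          have : 2 ^ 4 ≤ (1 / α) ^ 4 := by gcongr; rw [le_div_iff₀ hα₀]; linarith
          calc (2 : ℝ) = 2 ^ 4 / 8 := by norm_num
            _ ≤ (1 / α) ^ 4 / 8 := by gcongr
            _ = (1 / α) ^ 6 * (α ^ 2 / 8) := by field_simp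
      _ = exp (6 * k * log (1 / α)) * (α ^ 2 / 8) ^ k := by
          rw [mul_pow, ← pow_mul, ← exp_log (pow_pos (one_div_pos.2 hα₀) _), log_pow]
          push_cast
          rfl
      _ ≤ exp (α ^ 2 * m / 4) * (α ^ 2 / 8) ^ k := by
          gcongr
          rw [div_le_iff₀ (by positivity)] at hm
          linarith
  refine le_of_mul_le_mul_right ?_ (pow_pos ht k)
  calc _ = 2 * ((∑ i ∈ range (k + 1), ((m + m).choose i : ℝ)) * (α ^ 2 / 8) ^ k) := by ring
    _ ≤ (exp (α ^ 2 * m / 4) * (α ^ 2 / 8) ^ k) * exp (α ^ 2 * m / 4) := by gcongr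
    _ = exp (α ^ 2 * m / 2) * (α ^ 2 / 8) ^ k := by
        rw [mul_right_comm, ← exp_add]
        ring_nf

end GrowthBound

section CountingQueries

variable {X : Type*}

/-- The real-valued indicator of a predicate, whose averages are the values of the counting
query. -/
def predIndicator (φ : X → Bool) (x : X) : ℝ := (φ x).toNat

theorem abs_predIndicator_sub_le_one (φ : X → Bool) (x y : X) :
    |predIndicator φ x - predIndicator φ y| ≤ 1 := by
  cases hx : φ x <;> cases hy : φ y <;> simp [predIndicator, hx, hy]

theorem cquery_map_univ_s2 {ι : Type*} [Fintype ι] (φ : X → Bool) (d : ι → X) :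
    cquery φ ((univ : Finset ι).val.map d) = 𝔼 i, predIndicator φ (d i) := by
  have card_filter_map : 
      (((univ : Finset ι).val.map d).filter (φ · = true)).card = ∑ i, (φ (d i)).toNat := by
    rw [Multiset.filter_map, Multiset.card_map, ← filter_val, card_val, card_filter]
    simp [Bool.toNat, Bool.cond_eq_ite]
  simp [cquery, card_filter_map, Fintype.expect_eq_sum_div_card, predIndicator]

theorem encard_predIndicator_comp_image_le {ι : Type*} [Fintype ι] {P : Set (X → Bool)} {k : ℕ}
    (hP : ∀ S : Finset X, Shatters P S → #S ≤ k) (w : ι → X) :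
    ((predIndicator · ∘ w) '' P).encard ≤
      (∑ i ∈ range (k + 1), (Fintype.card ι).choose i : ℕ) :=
  calc ((predIndicator · ∘ w) '' P).encard = (predIndicator '' ((· ∘ w) '' P)).encard := by
        rw [Set.image_image]; rfl
    _ ≤ ((· ∘ w) '' P).encard := Set.encard_image_le _ _
    _ = ((· ∘ w) '' P).ncard := (Set.Finite.cast_ncard_eq (Set.toFinite _)).symm
    _ ≤ (∑ i ∈ range (k + 1), (Fintype.card ι).choose i : ℕ) := by
        exact_mod_cast ncard_le_sum_choose_of_shatters_card_le fun S hS => hS.card_le_of_comp hP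

theorem exists_finset_mem_iff_card_eq [Fintype X] (m : ℕ) :
    ∃ N : Finset (Multiset X), (∀ D, D ∈ N ↔ D.card = m) ∧ #N ≤ Fintype.card X ^ m := by
  refine ⟨univ.image fun v : List.Vector X m => (v.toList : Multiset X),
    fun D => ⟨?_, fun hD => ?_⟩, card_image_le.trans (by simp)⟩
  · simp +contextual [eq_comm]
  · exact mem_image.2 ⟨⟨D.toList, by simpa using hD⟩, mem_univ _, D.coe_toList⟩

theorem exists_net_card_le_of_forall_exists_card_eq [Fintype X]
    {r : Multiset X → Multiset X → Prop} {m : ℕ}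
    (hr : ∀ D ≠ 0, ∃ D', D' ≠ 0 ∧ D'.card = m ∧ r D D') :
    ∃ N : Finset (Multiset X), (∀ D' ∈ N, D' ≠ 0) ∧ (∀ D, D ≠ 0 → ∃ D' ∈ N, r D D') ∧
      #N ≤ Fintype.card X ^ m := by
  obtain ⟨N, mem_N, card_N⟩ := exists_finset_mem_iff_card_eq (X := X) m
  refine ⟨{D' ∈ N | D' ≠ 0}, fun D' hD' => (mem_filter.1 hD').2, fun D hD => ?_,
    (card_filter_le _ _).trans card_N⟩
  obtain ⟨D', hD'₀, hD'm, hDD'⟩ := hr D hD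
  exact ⟨D', mem_filter.2 ⟨(mem_N D').2 hD'm, hD'₀⟩, hDD'⟩

theorem stmt2_general {P : Set (X → Bool)} {k : ℕ} (hk : 1 ≤ k)
    (hP : ∀ S : Finset X, Shatters P S → #S ≤ k) {α : ℝ} (hα₀ : 0 < α) (hα₁ : α ≤ 1 / 2)
    {D : Multiset X} (hD : D ≠ 0) :
    ∃ D' : Multiset X, D' ≠ 0 ∧ D'.card = ⌈24 * k * log (1 / α) / α ^ 2⌉₊ ∧
      ∀ φ ∈ P, |cquery φ D - cquery φ D'| ≤ α := by
  set m := ⌈24 * k * log (1 / α) / α ^ 2⌉₊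
  have hm : 0 < m := Nat.ceil_pos.2 <| by
    have : 0 < log (1 / α) := log_pos (by rw [lt_div_iff₀ hα₀]; linarith)
    positivity
  have nonempty_D : Nonempty D := Fintype.card_pos_iff.1 (by simpa [Multiset.card_pos] using hD)
  obtain ⟨x, hx⟩ := exists_forall_abs_expect_sub_expect_le (ι := Fin m)
    (F := (predIndicator · ∘ fun y : D => (y : X)) '' P)
    (Set.forall_mem_image.2 fun φ _ y y' => abs_predIndicator_sub_le_one φ y y')
    (fun w => by
      rw [Set.image_image]
      exact encard_predIndicator_comp_image_le hP fun i => (w i : X))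
    hα₀.le
    (by
      simp only [Fintype.card_sum, Fintype.card_fin]
      exact two_mul_sum_choose_le_exp hk hα₀ hα₁ (Nat.le_ceil _))
  refine ⟨univ.val.map fun i => (x i : X), Multiset.card_pos.1 (by simpa using hm), by simp,
    fun φ hφ => ?_⟩
  have cquery_D : cquery φ D = 𝔼 y : D, predIndicator φ y := by
    rw [← cquery_map_univ_s2, D.map_univ_coe]
  rw [cquery_D, cquery_map_univ_s2]
  exact hx _ ⟨φ, hφ, rfl⟩

end CountingQueries

theorem stmt2 :
    ∃ c : ℝ, 0 < c ∧
      ∀ (X : Type) [Fintype X] (P : Set (X → Bool)) (k : ℕ), 1 ≤ k →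
        (∃ S : Finset X, S.card = k ∧ Shatters P S) →
        (∀ S : Finset X, Shatters P S → S.card ≤ k) →
        ∀ α : ℝ, 0 < α → α < 1 / 2 →
          ∃ N : Finset (Multiset X), (∀ D' ∈ N, D' ≠ 0) ∧
            (∀ D : Multiset X, D ≠ 0 →
              ∃ D' ∈ N, ∀ φ ∈ P, |cquery φ D - cquery φ D'| ≤ α) ∧
            N.card ≤ Fintype.card X ^ ⌈c * k * Real.log (1 / α) / α ^ 2⌉₊ :=
  ⟨24, by norm_num, fun _ _ _ _ hk _ hP _ hα₀ hα₁ =>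
    exists_net_card_le_of_forall_exists_card_eq fun _ => stmt2_general hk hP hα₀ hα₁.le⟩
end

section
/- Let C be a finite class of real-valued queries on databases of size n over a domain X, each with global sensitivity at most Δ (i.e., |Q(D) − Q(D'')| ≤ Δ whenever D and D'' are neighbors), and let N be a finite α-net for C. The Net mechanism on input D outputs D' ∈ N with probability proportional to exp(ε · q(D,D') / (2Δ)), where q(D,D') = −max_{Q∈C} |Q(D) − Q(D')|. If α ≥ (2Δ/ε) · ln(|N| / δ), then for every database D of size n, with probability at least 1 − δ the output D' satisfies max_{Q∈C} |Q(D) − Q(D')| ≤ 2α; i.e., the Net mechanism is (2α, δ)-useful for C. -/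
attribute [local instance] Classical.propDecidable

/-- Two databases (multisets) are neighbors if one is obtained from the other by replacing
a single element. -/
def Neighbor {X : Type*} (D D' : Multiset X) : Prop :=
  ∃ (D₀ : Multiset X) (x y : X), D = x ::ₘ D₀ ∧ D' = y ::ₘ D₀

/-! A net point within `α` of `D` has weight at least `E = exp (-ε α / (2Δ))`, whereas one with
error above `2α` has weight at most `E²`. The bad net points therefore weigh at most `|N| E²` in
total, and the hypothesis on `α` says exactly that `|N| E ≤ δ`. So the bad weight is at most `δ E`,
which is at most `δ` times the total weight. -/

theorem mul_exp_neg_le_of_log_div_le {k δ x : ℝ} (hδ : 0 < δ) (h : Real.log (k / δ) ≤ x) :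
    k * Real.exp (-x) ≤ δ := by
  rw [Real.exp_neg, ← div_eq_mul_inv, div_le_comm₀ (Real.exp_pos x) hδ]
  exact (Real.le_exp_log _).trans (Real.exp_le_exp.mpr h)

section ExponentialMechanism

variable {ι : Type*} {s : Finset ι} {f : ι → ℝ} {c δ a b t : ℝ}

theorem one_sub_mul_sum_le_sum_filter_of_sum_filter_not_le {w : ι → ℝ} {p : ι → Prop}
    (h : ∑ i ∈ s with ¬ p i, w i ≤ δ * ∑ i ∈ s, w i) :
    (1 - δ) * ∑ i ∈ s, w i ≤ ∑ i ∈ s with p i, w i := by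
  have hsplit := Finset.sum_filter_add_sum_filter_not s p w
  linarith

theorem exp_neg_mul_le_sum_exp_neg_mul (hc : 0 ≤ c) {i : ι} (hi : i ∈ s) (hfi : f i ≤ a) :
    Real.exp (-(c * a)) ≤ ∑ j ∈ s, Real.exp (-(c * f j)) :=
  calc
    Real.exp (-(c * a)) ≤ Real.exp (-(c * f i)) := by gcongr
    _ ≤ ∑ j ∈ s, Real.exp (-(c * f j)) :=
      Finset.single_le_sum (f := fun j => Real.exp (-(c * f j)))
        (fun _ _ => (Real.exp_pos _).le) hi

theorem sum_filter_not_le_exp_neg_mul_le (hc : 0 ≤ c) :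
    ∑ i ∈ s with ¬ f i ≤ b, Real.exp (-(c * f i)) ≤ s.card * Real.exp (-(c * b)) := by
  have hterm : ∀ i ∈ s.filter (fun i => ¬ f i ≤ b),
      Real.exp (-(c * f i)) ≤ Real.exp (-(c * b)) := by
    intro i hi
    have hbi : b ≤ f i := (not_le.mp (Finset.mem_filter.mp hi).2).le
    gcongr
  calc
    _ ≤ ((s.filter fun i => ¬ f i ≤ b).card : ℝ) * Real.exp (-(c * b)) := by
      simpa only [nsmul_eq_mul] using Finset.sum_le_card_nsmul _ _ _ hterm
    _ ≤ s.card * Real.exp (-(c * b)) := by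
      gcongr
      exact Finset.filter_subset _ _

theorem sum_filter_not_le_add_exp_neg_mul_le (hc : 0 ≤ c) (hs : ∃ i ∈ s, f i ≤ a) :
    ∑ i ∈ s with ¬ f i ≤ a + t, Real.exp (-(c * f i)) ≤
      s.card * Real.exp (-(c * t)) * ∑ i ∈ s, Real.exp (-(c * f i)) := by
  obtain ⟨i, hi, hfi⟩ := hs
  calc
    _ ≤ s.card * Real.exp (-(c * (a + t))) := sum_filter_not_le_exp_neg_mul_le hc
    _ = s.card * Real.exp (-(c * t)) * Real.exp (-(c * a)) := by
      rw [mul_assoc, ← Real.exp_add]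
      ring_nf
    _ ≤ _ := by
      gcongr
      exact exp_neg_mul_le_sum_exp_neg_mul hc hi hfi

theorem one_sub_mul_sum_exp_neg_mul_le_sum_filter (hc : 0 ≤ c) (hδ : 0 < δ)
    (hs : ∃ i ∈ s, f i ≤ a) (ht : Real.log (s.card / δ) ≤ c * t) :
    (1 - δ) * ∑ i ∈ s, Real.exp (-(c * f i)) ≤
      ∑ i ∈ s with f i ≤ a + t, Real.exp (-(c * f i)) := by
  apply one_sub_mul_sum_le_sum_filter_of_sum_filter_not_le
  calc
    _ ≤ s.card * Real.exp (-(c * t)) * ∑ i ∈ s, Real.exp (-(c * f i)) :=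
      sum_filter_not_le_add_exp_neg_mul_le hc hs
    _ ≤ δ * ∑ i ∈ s, Real.exp (-(c * f i)) := by
      gcongr
      exact mul_exp_neg_le_of_log_div_le hδ ht

end ExponentialMechanism

/-- The largest error `max_{Q ∈ C} |Q D - Q D'|` made by answering the queries of `C` on `D'`
instead of `D`, i.e. `-q(D, D')` for the quality score `q` of the Net mechanism. The data type is
arbitrary, since only the query values matter. -/
noncomputable def maxQueryError {𝓓 : Type*} (C : Finset (𝓓 → ℝ)) (hC : C.Nonempty) (D D' : 𝓓) : ℝ :=
  C.sup' hC fun Q => |Q D - Q D'|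

theorem stmt3_general {𝓓 : Type*} (C : Finset (𝓓 → ℝ)) (hC : C.Nonempty) {Δ ε δ α : ℝ}
    (hΔ : 0 < Δ) (hε : 0 < ε) (hδ : 0 < δ) (N : Finset 𝓓) (D : 𝓓)
    (hnet : ∃ D' ∈ N, maxQueryError C hC D D' ≤ α)
    (hα : 2 * Δ / ε * Real.log (N.card / δ) ≤ α) :
    (1 - δ) * ∑ D' ∈ N, Real.exp (ε * (-maxQueryError C hC D D') / (2 * Δ)) ≤
      ∑ D' ∈ N with maxQueryError C hC D D' ≤ 2 * α,
        Real.exp (ε * (-maxQueryError C hC D D') / (2 * Δ)) := by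
  have hweight (x : ℝ) : ε * -x / (2 * Δ) = -(ε / (2 * Δ) * x) := by ring
  have hlog : Real.log (N.card / δ) ≤ ε / (2 * Δ) * α := by
    rwa [← inv_div (2 * Δ) ε, ← div_eq_inv_mul, le_div_iff₀' (by positivity)]
  simp only [hweight, two_mul α]
  exact one_sub_mul_sum_exp_neg_mul_le_sum_filter (by positivity) hδ hnet hlog

theorem stmt3 {X : Type*} (n : ℕ) (hn : 1 ≤ n)
    (C : Finset ((Multiset X) → ℝ)) (hC : C.Nonempty)
    (Δ ε δ α : ℝ) (hΔ : 0 < Δ) (hε : 0 < ε) (hδ : 0 < δ) (hα : 0 < α)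
    -- every query in C has global sensitivity at most Δ
    (hsens : ∀ Q ∈ C, ∀ D D'' : Multiset X,
      D.card = n → D''.card = n → Neighbor D D'' → |Q D - Q D''| ≤ Δ)
    -- N is an α-net for C
    (N : Finset (Multiset X))
    (hnet : ∀ D : Multiset X, D ≠ 0 →
      ∃ D' ∈ N, (C.sup' hC fun Q => |Q D - Q D'|) ≤ α)
    (hαbig : α ≥ 2 * Δ / ε * Real.log ((N.card : ℝ) / δ)) :
    -- the Net mechanism, which outputs `D' ∈ N` with probability proportional to
    -- `exp (ε q(D,D') / (2Δ))` where `q(D,D') = - max_{Q ∈ C} |Q D - Q D'|`,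
    -- outputs with probability at least `1 - δ` some `D'` with
    -- `max_{Q ∈ C} |Q D - Q D'| ≤ 2α`
    ∀ D : Multiset X, D.card = n →
      (1 - δ) * ∑ D' ∈ N, Real.exp (ε * (-(C.sup' hC fun Q => |Q D - Q D'|)) / (2 * Δ)) ≤
        ∑ D' ∈ N.filter (fun D' => (C.sup' hC fun Q => |Q D - Q D'|) ≤ 2 * α),
          Real.exp (ε * (-(C.sup' hC fun Q => |Q D - Q D'|)) / (2 * Δ)) := by
  intro D hD
  have hD_ne : D ≠ 0 := Multiset.card_pos.mp (hD ▸ hn)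
  exact stmt3_general C hC hΔ hε hδ N D (hnet D hD_ne) hαbig
end

section
/- Let C be a finite class of counting queries over a domain X, and let N be a finite α-net for C. The Net mechanism on input a database D of size n outputs D' ∈ N with probability proportional to exp(ε n · q(D,D') / 2), where q(D,D') = −max_{Q∈C} |Q(D) − Q(D')|. If α ≥ (2/(ε n)) · ln(|N| / δ), then for every database D of size n, with probability at least 1 − δ the output D' satisfies max_{Q∈C} |Q(D) − Q(D')| ≤ 2α. -/
attribute [local instance] Classical.propDecidable

/-!
By the net property some `D₀ ∈ N` has error at most `α`, so every `D'` with error above `2α` is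
less likely than `D₀` by a factor of at least `exp (ε n α / 2)`. There are at most `|N|` such `D'`,
and a union bound gives them total probability at most `|N| exp (-ε n α / 2)`, which is at most `δ`
precisely when `α ≥ (2 / (ε n)) log (|N| / δ)`.
-/

section ExponentialMechanism

variable {ι : Type*} {N : Finset ι} {u : ι → ℝ} {η δ t : ℝ}

lemma sum_exp_filter_lt_le_card_mul_exp (hη : 0 ≤ η) (τ : ℝ) :
    ∑ i ∈ N with u i < τ, Real.exp (η * u i) ≤ N.card * Real.exp (η * τ) := by
  calc ∑ i ∈ N with u i < τ, Real.exp (η * u i)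
      ≤ (N.filter (u · < τ)).card • Real.exp (η * τ) := by
        refine Finset.sum_le_card_nsmul _ _ _ fun i hi ↦ ?_
        have hlt : u i < τ := (Finset.mem_filter.mp hi).2
        gcongr
    _ ≤ N.card * Real.exp (η * τ) := by
        rw [nsmul_eq_mul]
        gcongr
        exact Finset.filter_subset _ _

lemma sum_exp_filter_lt_sub_le_mul_sum_exp (hη : 0 ≤ η) {i₀ : ι} (hi₀ : i₀ ∈ N) (t : ℝ) :
    ∑ i ∈ N with u i < u i₀ - t, Real.exp (η * u i) ≤
      N.card * Real.exp (-(η * t)) * ∑ i ∈ N, Real.exp (η * u i) := by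
  have hsingle : Real.exp (η * u i₀) ≤ ∑ i ∈ N, Real.exp (η * u i) :=
    Finset.single_le_sum (f := fun i ↦ Real.exp (η * u i)) (fun _ _ ↦ (Real.exp_pos _).le) hi₀
  calc ∑ i ∈ N with u i < u i₀ - t, Real.exp (η * u i)
      ≤ N.card * Real.exp (η * (u i₀ - t)) := sum_exp_filter_lt_le_card_mul_exp hη _
    _ = N.card * Real.exp (-(η * t)) * Real.exp (η * u i₀) := by
        rw [mul_assoc, ← Real.exp_add]
        ring_nf
    _ ≤ N.card * Real.exp (-(η * t)) * ∑ i ∈ N, Real.exp (η * u i) := by gcongr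

lemma mul_exp_neg_le_of_inv_mul_log_le (hη : 0 < η) (hδ : 0 < δ) {m : ℝ}
    (ht : η⁻¹ * Real.log (m / δ) ≤ t) : m * Real.exp (-(η * t)) ≤ δ := by
  have hlog : Real.log (m / δ) ≤ η * t := (inv_mul_le_iff₀ hη).mp ht
  have hdiv : m / δ ≤ Real.exp (η * t) :=
    (Real.le_exp_log _).trans (Real.exp_le_exp.mpr hlog)
  rwa [Real.exp_neg, ← div_eq_mul_inv, div_le_comm₀ (Real.exp_pos _) hδ]

theorem one_sub_mul_sum_exp_le_sum_exp_filter_sub_le (hη : 0 < η) (hδ : 0 < δ)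
    (ht : η⁻¹ * Real.log (N.card / δ) ≤ t) {i₀ : ι} (hi₀ : i₀ ∈ N) :
    (1 - δ) * ∑ i ∈ N, Real.exp (η * u i) ≤
      ∑ i ∈ N with u i₀ - t ≤ u i, Real.exp (η * u i) := by
  have hbad : ∑ i ∈ N with u i < u i₀ - t, Real.exp (η * u i) ≤
      δ * ∑ i ∈ N, Real.exp (η * u i) :=
    (sum_exp_filter_lt_sub_le_mul_sum_exp hη.le hi₀ t).trans <| by
      gcongr
      exact mul_exp_neg_le_of_inv_mul_log_le hη hδ ht
  have hsplit := Finset.sum_filter_add_sum_filter_not N (u i₀ - t ≤ u ·)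
    fun i ↦ Real.exp (η * u i)
  simp only [not_le] at hsplit
  linarith

end ExponentialMechanism

/- Only the error `err D'` of each output `D' ∈ N` on the given input matters: for the Net
mechanism it is `max_{Q ∈ C} |Q(D) - Q(D')|`, and `c = ε n`. -/
theorem stmt4_general {ι : Type*} {N : Finset ι} {err : ι → ℝ} {c δ α : ℝ}
    (hc : 0 < c) (hδ : 0 < δ) (hnet : ∃ i ∈ N, err i ≤ α)
    (hα : 2 / c * Real.log (N.card / δ) ≤ α) :
    (1 - δ) * ∑ i ∈ N, Real.exp (c * (-err i) / 2) ≤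
      ∑ i ∈ N with err i ≤ 2 * α, Real.exp (c * (-err i) / 2) := by
  obtain ⟨i₀, hi₀, herr⟩ := hnet
  simp only [mul_div_right_comm c]
  calc (1 - δ) * ∑ i ∈ N, Real.exp (c / 2 * (-err i))
      ≤ ∑ i ∈ N with -err i₀ - α ≤ -err i, Real.exp (c / 2 * (-err i)) :=
        one_sub_mul_sum_exp_le_sum_exp_filter_sub_le (half_pos hc) hδ (by rwa [inv_div]) hi₀
    _ ≤ ∑ i ∈ N with err i ≤ 2 * α, Real.exp (c / 2 * (-err i)) := by
        refine Finset.sum_le_sum_of_subset_of_nonneg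
          (Finset.monotone_filter_right N fun i _ hi ↦ ?_) fun _ _ _ ↦ (Real.exp_pos _).le
        linarith

theorem stmt4 {X : Type*} (n : ℕ) (hn : 1 ≤ n)
    (C : Finset (X → Bool)) (hC : C.Nonempty)
    (ε δ α : ℝ) (hε : 0 < ε) (hδ : 0 < δ) (hα : 0 < α)
    -- N is an α-net for C
    (N : Finset (Multiset X))
    (hnet : ∀ D : Multiset X, D ≠ 0 →
      ∃ D' ∈ N, (C.sup' hC fun φ => |cquery φ D - cquery φ D'|) ≤ α)
    (hαbig : α ≥ 2 / (ε * n) * Real.log ((N.card : ℝ) / δ)) :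
    -- the Net mechanism, which outputs `D' ∈ N` with probability proportional to
    -- `exp (ε n q(D,D') / 2)` where `q(D,D') = - max_{φ ∈ C} |Q_φ D - Q_φ D'|`,
    -- outputs with probability at least `1 - δ` some `D'` with
    -- `max_{φ ∈ C} |Q_φ D - Q_φ D'| ≤ 2α`
    ∀ D : Multiset X, D.card = n →
      (1 - δ) * ∑ D' ∈ N,
          Real.exp (ε * n * (-(C.sup' hC fun φ => |cquery φ D - cquery φ D'|)) / 2) ≤
        ∑ D' ∈ N.filter
            (fun D' => (C.sup' hC fun φ => |cquery φ D - cquery φ D'|) ≤ 2 * α),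
          Real.exp (ε * n * (-(C.sup' hC fun φ => |cquery φ D - cquery φ D'|)) / 2) := by
  intro D hD
  have hD0 : D ≠ 0 := Multiset.card_pos.mp (hD ▸ hn)
  exact stmt4_general (mul_pos hε (Nat.cast_pos.mpr hn)) hδ (hnet D hD0) hαbig
end

section
/- Let R be a finite nonempty set, X a domain, and q a quality function assigning to each size-n database D over X and each r ∈ R a real number q(D,r), such that |q(D,r) − q(D'',r)| ≤ Δ for all r ∈ R whenever D and D'' are neighboring size-n databases. Then the exponential mechanism, which on input D outputs r ∈ R with probability proportional to exp(ε · q(D,r) / (2Δ)), is ε-differentially private. -/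
attribute [local instance] Classical.propDecidable

/-!
Changing one element moves every score `ε q(D, r) / (2Δ)` by at most `ε / 2`. Hence every weight
`exp (ε q(D, r) / (2Δ))` changes by a factor of at most `exp (ε / 2)`, and so does the normalizer,
being an integral of such weights; the two factors multiply to `exp ε`. The argument only compares
densities, so it applies to any base measure on the output space.
-/

open MeasureTheory

section Tilted

variable {α : Type*} [MeasurableSpace α] {μ : Measure α} {f g : α → ℝ} {c : ℝ}

lemma integral_exp_le_exp_mul_integral_exp (hf : Integrable (fun x ↦ Real.exp (f x)) μ)
    (hg : Integrable (fun x ↦ Real.exp (g x)) μ) (hfg : ∀ᵐ x ∂μ, f x ≤ c + g x) :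
    ∫ x, Real.exp (f x) ∂μ ≤ Real.exp c * ∫ x, Real.exp (g x) ∂μ := by
  rw [← integral_const_mul]
  refine integral_mono_ae hf (hg.const_mul _) ?_
  filter_upwards [hfg] with x hx
  rw [← Real.exp_add]
  exact Real.exp_le_exp.2 hx

lemma tilted_le_smul_tilted_of_abs_sub_le [NeZero μ] (hf : Integrable (fun x ↦ Real.exp (f x)) μ)
    (hg : Integrable (fun x ↦ Real.exp (g x)) μ) (hfg : ∀ᵐ x ∂μ, |f x - g x| ≤ c) :
    μ.tilted f ≤ ENNReal.ofReal (Real.exp (2 * c)) • μ.tilted g := by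
  have hf_pos := integral_exp_pos hf
  have hg_pos := integral_exp_pos hg
  have normalizer_le : ∫ x, Real.exp (g x) ∂μ ≤ Real.exp c * ∫ x, Real.exp (f x) ∂μ := by
    refine integral_exp_le_exp_mul_integral_exp hg hf ?_
    filter_upwards [hfg] with x hx
    linarith [neg_le_of_abs_le hx]
  rw [Measure.tilted, Measure.tilted, ← withDensity_smul' _ _ ENNReal.ofReal_ne_top]
  refine withDensity_mono ?_
  filter_upwards [hfg] with x hx
  have weight_le : Real.exp (f x) ≤ Real.exp c * Real.exp (g x) := by
    rw [← Real.exp_add, Real.exp_le_exp]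
    linarith [le_of_abs_le hx]
  rw [Pi.smul_apply, smul_eq_mul, ← ENNReal.ofReal_mul (Real.exp_pos _).le]
  refine ENNReal.ofReal_le_ofReal ?_
  rw [← mul_div_assoc, div_le_div_iff₀ hf_pos hg_pos]
  calc Real.exp (f x) * ∫ x, Real.exp (g x) ∂μ
      ≤ (Real.exp c * Real.exp (g x)) * (Real.exp c * ∫ x, Real.exp (f x) ∂μ) := by gcongr
    _ = Real.exp (2 * c) * Real.exp (g x) * ∫ x, Real.exp (f x) ∂μ := by
      rw [two_mul, Real.exp_add]
      ring

lemma tilted_count_finset [Fintype α] [MeasurableSingletonClass α] (f : α → ℝ) (S : Finset α) :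
    (Measure.count.tilted f) S =
      ENNReal.ofReal ((∑ x ∈ S, Real.exp (f x)) / ∑ x, Real.exp (f x)) := by
  rw [tilted_apply, lintegral_finset, integral_count, Finset.sum_div,
    ENNReal.ofReal_sum_of_nonneg fun x _ ↦ by positivity]
  simp only [Measure.count_singleton, mul_one]

end Tilted

section ExponentialMechanism

variable {𝒟 R : Type*} [MeasurableSpace R] {adj : 𝒟 → 𝒟 → Prop} {q : 𝒟 → R → ℝ} {Δ ε : ℝ}

/-- Pure `ε`-differential privacy of a mechanism `A` with respect to an arbitrary adjacency
relation `adj` on databases. -/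
def IsDifferentiallyPrivate (adj : 𝒟 → 𝒟 → Prop) (ε : ℝ) (A : 𝒟 → Measure R) : Prop :=
  ∀ D D', adj D D' → ∀ S, MeasurableSet S → A D S ≤ ENNReal.ofReal (Real.exp ε) * A D' S

/-- The exponential mechanism with base measure `μ`, quality function `q`, sensitivity `Δ` and
privacy parameter `ε`: its output has density proportional to `exp (ε q(D, r) / (2Δ))` with respect
to `μ`, and it is the zero measure if these weights are not integrable. For a finite output space,
`μ` is the counting measure. -/
noncomputable def exponentialMechanism (μ : Measure R) (q : 𝒟 → R → ℝ) (Δ ε : ℝ) (D : 𝒟) :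
    Measure R :=
  μ.tilted fun r ↦ ε * q D r / (2 * Δ)

lemma IsDifferentiallyPrivate.sum_exp_div_sum_exp_le [Fintype R] [MeasurableSingletonClass R]
    (h : IsDifferentiallyPrivate adj ε (exponentialMechanism Measure.count q Δ ε))
    {D D' : 𝒟} (hDD' : adj D D') (S : Finset R) :
    (∑ r ∈ S, Real.exp (ε * q D r / (2 * Δ))) / (∑ r, Real.exp (ε * q D r / (2 * Δ))) ≤
      Real.exp ε * ((∑ r ∈ S, Real.exp (ε * q D' r / (2 * Δ))) /
        ∑ r, Real.exp (ε * q D' r / (2 * Δ))) := by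
  have event_le := h D D' hDD' S S.measurableSet
  rwa [exponentialMechanism, exponentialMechanism, tilted_count_finset, tilted_count_finset,
    ← ENNReal.ofReal_mul (Real.exp_pos _).le, ENNReal.ofReal_le_ofReal_iff (by positivity)]
    at event_le

lemma abs_mul_div_sub_mul_div_le {a b : ℝ} (hΔ : 0 < Δ) (hε : 0 ≤ ε) (hab : |a - b| ≤ Δ) :
    |ε * a / (2 * Δ) - ε * b / (2 * Δ)| ≤ ε / 2 :=
  calc |ε * a / (2 * Δ) - ε * b / (2 * Δ)|
      = |ε / (2 * Δ) * (a - b)| := by ring_nf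
    _ = ε / (2 * Δ) * |a - b| := by rw [abs_mul, abs_of_nonneg (by positivity)]
    _ ≤ ε / (2 * Δ) * Δ := by gcongr
    _ = ε / 2 := by field_simp

theorem stmt5_general (μ : Measure R) [NeZero μ] (hΔ : 0 < Δ) (hε : 0 ≤ ε)
    (hint : ∀ D, Integrable (fun r ↦ Real.exp (ε * q D r / (2 * Δ))) μ)
    (hsens : ∀ D D', adj D D' → ∀ᵐ r ∂μ, |q D r - q D' r| ≤ Δ) :
    IsDifferentiallyPrivate adj ε (exponentialMechanism μ q Δ ε) := by
  intro D D' hDD' S _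
  have score_close : ∀ᵐ r ∂μ, |ε * q D r / (2 * Δ) - ε * q D' r / (2 * Δ)| ≤ ε / 2 :=
    (hsens D D' hDD').mono fun r ↦ abs_mul_div_sub_mul_div_le hΔ hε
  have measure_le := tilted_le_smul_tilted_of_abs_sub_le (hint D) (hint D') score_close
  rw [mul_div_cancel₀ ε two_ne_zero] at measure_le
  exact measure_le S

end ExponentialMechanism

theorem stmt5 {X R : Type*} [Fintype R] [Nonempty R] (n : ℕ) (hn : 1 ≤ n)
    (q : Multiset X → R → ℝ) (Δ ε : ℝ) (hΔ : 0 < Δ) (hε : 0 < ε)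
    -- q has sensitivity at most Δ in its database argument
    (hsens : ∀ D D'' : Multiset X, D.card = n → D''.card = n → Neighbor D D'' →
      ∀ r : R, |q D r - q D'' r| ≤ Δ) :
    -- the exponential mechanism, which outputs `r ∈ R` with probability proportional to
    -- `exp (ε q(D,r) / (2Δ))`, is ε-differentially private
    ∀ D D'' : Multiset X, D.card = n → D''.card = n → Neighbor D D'' →
      ∀ S : Finset R,
        (∑ r ∈ S, Real.exp (ε * q D r / (2 * Δ))) /
            (∑ r : R, Real.exp (ε * q D r / (2 * Δ))) ≤
          Real.exp ε *
            ((∑ r ∈ S, Real.exp (ε * q D'' r / (2 * Δ))) /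
              (∑ r : R, Real.exp (ε * q D'' r / (2 * Δ)))) := by
  intro D D'' hD hD'' hN
  let _ : MeasurableSpace R := ⊤
  exact (stmt5_general (adj := fun D D'' ↦ D.card = n ∧ D''.card = n ∧ Neighbor D D'')
    Measure.count hΔ hε.le (fun _ ↦ .of_finite) fun D D'' h ↦
      .of_forall (hsens D D'' h.1 h.2.1 h.2.2)).sum_exp_div_sum_exp_le ⟨hD, hD'', hN⟩
end

section
/- For every finite domain X, every finite class C of counting queries over X with |C| ≥ 3, every ε > 0, every δ ∈ (0,1), every α ∈ (0,1), and every n such that α ≥ (2/(ε n)) · (⌈ln|C| / α²⌉ · ln|X| + ln(1/δ)), there exists an ε-differentially private mechanism mapping size-n databases over X to databases over X of size ⌈ln|C| / α²⌉ that is (2α, δ)-useful for C. -/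
attribute [local instance] Classical.propDecidable

/-!
By Hoeffding's inequality and a union bound over `C`, a random sample of `m = ⌈ln|C| / α²⌉`
elements of `D` answers every query of `C` within `α` with positive probability, so some database
of size `m` does. The exponential mechanism over the `|X|^m` tuples of length `m`, with the
worst-case error as loss, then returns a database whose error is at most `2α`, except with
probability at most `|X|^m · exp (-ε n α / 2) ≤ δ`. Replacing one element of `D` moves the loss by
at most `1 / n`, which gives privacy.
-/

open MeasureTheory ProbabilityTheory

section PMF

variable {T : Type*}

lemma toOuterMeasure_le_mul_of_forall_le_mul {p q : PMF T} {c : ENNReal}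
    (h : ∀ t, p t ≤ c * q t) (E : Set T) : p.toOuterMeasure E ≤ c * q.toOuterMeasure E := by
  rw [PMF.toOuterMeasure_apply, PMF.toOuterMeasure_apply, ← ENNReal.tsum_mul_left]
  refine ENNReal.tsum_le_tsum fun t ↦ ?_
  by_cases ht : t ∈ E <;> simp [ht, h t]

lemma one_sub_toOuterMeasure_compl_le (p : PMF T) (E : Set T) :
    1 - p.toOuterMeasure Eᶜ ≤ p.toOuterMeasure E := by
  have huniv : p.toOuterMeasure Set.univ = 1 :=
    (PMF.toOuterMeasure_apply_eq_one_iff p Set.univ).2 (Set.subset_univ _)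
  rw [tsub_le_iff_right, ← huniv, ← Set.union_compl_self E]
  exact measure_union_le E Eᶜ

end PMF

section ExpMechanism

variable {T : Type*} [Fintype T] [Nonempty T]

lemma sum_exp_neg_pos (u : T → ℝ) : 0 < ∑ s, Real.exp (-u s) :=
  Finset.sum_pos (fun _ _ ↦ Real.exp_pos _) Finset.univ_nonempty

/-- The exponential mechanism on a finite range: it returns `t` with probability proportional to
`exp (-u t)`. Here `u` is a loss, already multiplied by the privacy scale. -/
noncomputable def expMechanism (u : T → ℝ) : PMF T :=
  PMF.ofFintype (fun t ↦ ENNReal.ofReal (Real.exp (-u t) / ∑ s, Real.exp (-u s))) (by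
    rw [← ENNReal.ofReal_sum_of_nonneg (fun t _ ↦ by positivity), ← Finset.sum_div,
      div_self (sum_exp_neg_pos u).ne', ENNReal.ofReal_one])

lemma expMechanism_apply (u : T → ℝ) (t : T) :
    expMechanism u t = ENNReal.ofReal (Real.exp (-u t) / ∑ s, Real.exp (-u s)) := rfl

-- One factor `exp c` comes from the weight of `t`, the other from the normalizing sum.
lemma expMechanism_le_exp_mul {u v : T → ℝ} {c : ℝ} (h : ∀ t, |u t - v t| ≤ c) (t : T) :
    expMechanism u t ≤ ENNReal.ofReal (Real.exp (2 * c)) * expMechanism v t := by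
  have hweight : Real.exp (-u t) ≤ Real.exp c * Real.exp (-v t) := by
    rw [← Real.exp_add, Real.exp_le_exp]
    linarith [abs_le.1 (h t)]
  have hsum : ∑ s, Real.exp (-v s) ≤ Real.exp c * ∑ s, Real.exp (-u s) := by
    rw [Finset.mul_sum]
    refine Finset.sum_le_sum fun s _ ↦ ?_
    rw [← Real.exp_add, Real.exp_le_exp]
    linarith [abs_le.1 (h s)]
  rw [expMechanism_apply, expMechanism_apply, ← ENNReal.ofReal_mul (Real.exp_pos _).le]
  apply ENNReal.ofReal_le_ofReal
  rw [← mul_div_assoc, div_le_div_iff₀ (sum_exp_neg_pos u) (sum_exp_neg_pos v)]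
  calc Real.exp (-u t) * ∑ s, Real.exp (-v s)
      ≤ (Real.exp c * Real.exp (-v t)) * (Real.exp c * ∑ s, Real.exp (-u s)) := by gcongr
    _ = Real.exp (2 * c) * Real.exp (-v t) * ∑ s, Real.exp (-u s) := by
      rw [two_mul, Real.exp_add]; ring

lemma expMechanism_apply_le (u : T → ℝ) (s t : T) :
    expMechanism u t ≤ ENNReal.ofReal (Real.exp (u s - u t)) := by
  rw [expMechanism_apply]
  apply ENNReal.ofReal_le_ofReal
  rw [div_le_iff₀ (sum_exp_neg_pos u)]
  calc Real.exp (-u t) = Real.exp (u s - u t) * Real.exp (-u s) := by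
        rw [← Real.exp_add]; ring_nf
    _ ≤ Real.exp (u s - u t) * ∑ s, Real.exp (-u s) := by
        gcongr
        exact Finset.single_le_sum (f := fun s ↦ Real.exp (-u s))
          (fun _ _ ↦ (Real.exp_pos _).le) (Finset.mem_univ s)

lemma toOuterMeasure_expMechanism_lt_le (u : T → ℝ) (s : T) (b : ℝ) :
    (expMechanism u).toOuterMeasure {t | b < u t} ≤
      ENNReal.ofReal (Fintype.card T * Real.exp (u s - b)) := by
  rw [PMF.toOuterMeasure_apply_fintype]
  calc ∑ t, {t | b < u t}.indicator (expMechanism u) t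
      ≤ ∑ _t : T, ENNReal.ofReal (Real.exp (u s - b)) := by
        refine Finset.sum_le_sum fun t _ ↦ Set.indicator_apply_le' (fun ht ↦ ?_) fun _ ↦ zero_le
        refine (expMechanism_apply_le u s t).trans (ENNReal.ofReal_le_ofReal ?_)
        rw [Real.exp_le_exp]
        exact sub_le_sub_left (le_of_lt ht) _
    _ = ENNReal.ofReal (Fintype.card T * Real.exp (u s - b)) := by
        rw [Finset.sum_const, Finset.card_univ, nsmul_eq_mul,
          ENNReal.ofReal_mul (Nat.cast_nonneg _), ENNReal.ofReal_natCast]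

lemma one_sub_le_toOuterMeasure_expMechanism_le (u : T → ℝ) (s : T) (b : ℝ) :
    1 - ENNReal.ofReal (Fintype.card T * Real.exp (u s - b)) ≤
      (expMechanism u).toOuterMeasure {t | u t ≤ b} := by
  refine le_trans (tsub_le_tsub_left ?_ 1) (one_sub_toOuterMeasure_compl_le _ _)
  simpa only [Set.compl_ofPred, not_le] using toOuterMeasure_expMechanism_lt_le u s b

end ExpMechanism

section Hoeffding

variable {Ω ι : Type*} [MeasurableSpace Ω] {μ : Measure Ω} [Fintype ι]

lemma measureReal_abs_sum_ge_le_of_iIndepFun {Y : ι → Ω → ℝ} (hindep : iIndepFun Y μ)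
    {c : ι → NNReal} (hsubG : ∀ i, HasSubgaussianMGF (Y i) (c i) μ) {t : ℝ} (ht : 0 ≤ t) :
    μ.real {ω | t ≤ |∑ i, Y i ω|} ≤ 2 * Real.exp (-t ^ 2 / (2 * ↑(∑ i, c i))) := by
  have hsum : HasSubgaussianMGF (fun ω ↦ ∑ i, Y i ω) (∑ i, c i) μ :=
    HasSubgaussianMGF.sum_of_iIndepFun hindep fun i _ ↦ hsubG i
  have := hindep.isProbabilityMeasure
  calc μ.real {ω | t ≤ |∑ i, Y i ω|}
      = μ.real ({ω | t ≤ ∑ i, Y i ω} ∪ {ω | t ≤ -∑ i, Y i ω}) := by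
        simp only [le_abs, Set.ofPred_or]
    _ ≤ μ.real {ω | t ≤ ∑ i, Y i ω} + μ.real {ω | t ≤ -∑ i, Y i ω} := measureReal_union_le _ _
    _ ≤ Real.exp (-t ^ 2 / (2 * ↑(∑ i, c i))) + Real.exp (-t ^ 2 / (2 * ↑(∑ i, c i))) :=
        add_le_add (hsum.measure_ge_le ht) (hsum.neg.measure_ge_le ht)
    _ = 2 * Real.exp (-t ^ 2 / (2 * ↑(∑ i, c i))) := (two_mul _).symm

variable [IsProbabilityMeasure μ]

lemma pi_real_abs_sum_sub_integral_ge_le {g : Ω → ℝ} (hg : AEMeasurable g μ) {a b : ℝ}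
    (hab : ∀ᵐ ω ∂μ, g ω ∈ Set.Icc a b) {t : ℝ} (ht : 0 ≤ t) :
    (Measure.pi fun _ : ι ↦ μ).real {ω | t ≤ |∑ i, (g (ω i) - ∫ x, g x ∂μ)|} ≤
      2 * Real.exp (-2 * t ^ 2 / (Fintype.card ι * (b - a) ^ 2)) := by
  have hindep : iIndepFun (fun (i : ι) (ω : ι → Ω) ↦ g (ω i) - ∫ x, g x ∂μ)
      (Measure.pi fun _ ↦ μ) :=
    iIndepFun_pi (X := fun _ x ↦ g x - ∫ x, g x ∂μ) fun _ ↦ hg.sub_const _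
  have hsubG (i : ι) : HasSubgaussianMGF (fun ω : ι → Ω ↦ g (ω i) - ∫ x, g x ∂μ)
      ((‖b - a‖₊ / 2) ^ 2) (Measure.pi fun _ ↦ μ) := by
    rw [← integral_comp_eval (μ := fun _ : ι ↦ μ) (i := i) hg.aestronglyMeasurable]
    have heval := Measure.quasiMeasurePreserving_eval (fun _ : ι ↦ μ) i
    exact hasSubgaussianMGF_of_mem_Icc (hg.comp_quasiMeasurePreserving heval) (heval.ae hab)
  convert measureReal_abs_sum_ge_le_of_iIndepFun hindep hsubG ht using 3
  have hvar :
      2 * ((∑ _i : ι, (‖b - a‖₊ / 2) ^ 2 : NNReal) : ℝ) = Fintype.card ι * (b - a) ^ 2 / 2 := by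
    simp only [Finset.sum_const, Finset.card_univ, nsmul_eq_mul]
    push_cast
    rw [Real.norm_eq_abs, div_pow, sq_abs]
    ring
  rw [hvar, div_div_eq_mul_div]
  ring

lemma exists_forall_abs_sum_sub_integral_lt {κ : Type*} {s : Finset κ} {g : κ → Ω → ℝ}
    (hg : ∀ k ∈ s, AEMeasurable (g k) μ) {a b : ℝ}
    (hab : ∀ k ∈ s, ∀ᵐ ω ∂μ, g k ω ∈ Set.Icc a b) {t : ℝ} (ht : 0 ≤ t)
    (hs : s.card * (2 * Real.exp (-2 * t ^ 2 / (Fintype.card ι * (b - a) ^ 2))) < 1) :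
    ∃ ω : ι → Ω, ∀ k ∈ s, |∑ i, (g k (ω i) - ∫ x, g k x ∂μ)| < t := by
  by_contra! hbad
  set P := Measure.pi fun _ : ι ↦ μ
  let bad (k : κ) : Set (ι → Ω) := {ω | t ≤ |∑ i, (g k (ω i) - ∫ x, g k x ∂μ)|}
  have hcover : Set.univ ⊆ ⋃ k ∈ s, bad k := fun ω _ ↦ by
    simpa only [bad, Set.mem_iUnion, exists_prop] using! hbad ω
  refine hs.not_ge ?_
  calc (1 : ℝ) = P.real Set.univ := probReal_univ.symm
    _ ≤ P.real (⋃ k ∈ s, bad k) := measureReal_mono hcover (measure_ne_top P _)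
    _ ≤ ∑ k ∈ s, P.real (bad k) := measureReal_biUnion_finset_le _ _
    _ ≤ s.card • (2 * Real.exp (-2 * t ^ 2 / (Fintype.card ι * (b - a) ^ 2))) :=
      Finset.sum_le_card_nsmul _ _ _ fun k hk ↦
        pi_real_abs_sum_sub_integral_ge_le (hg k hk) (hab k hk) ht
    _ = s.card * (2 * Real.exp (-2 * t ^ 2 / (Fintype.card ι * (b - a) ^ 2))) := nsmul_eq_mul _ _

end Hoeffding

section Database

variable {X ι : Type*} [Fintype ι]

lemma abs_cquery_sub_le_of_neighbor (φ : X → Bool) {D D' : Multiset X} (h : Neighbor D D') :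
    |cquery φ D - cquery φ D'| ≤ 1 / D.card := by
  obtain ⟨D₀, x, y, rfl, rfl⟩ := h
  simp only [cquery, Multiset.card_cons, Multiset.filter_cons]
  rw [← sub_div, abs_div, Nat.abs_cast]
  gcongr
  split_ifs <;> simp

lemma tsum_count_eq_card (D : Multiset X) : ∑' x, (D.count x : ENNReal) = D.card := by
  rw [tsum_eq_sum (s := D.toFinset) fun x hx ↦ by simpa using hx, ← Nat.cast_sum,
    Multiset.sum_count_eq_card fun _ ↦ Multiset.mem_toFinset.2]

lemma integral_indicator_ofMultiset_eq_cquery [MeasurableSpace X] {φ : X → Bool}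
    (hφ : MeasurableSet {x | φ x = true}) {D : Multiset X} (hD : D ≠ 0) :
    ∫ x, {x | φ x = true}.indicator 1 x ∂(PMF.ofMultiset D hD).toMeasure = cquery φ D := by
  rw [integral_indicator_one hφ, measureReal_def, PMF.toMeasure_ofMultiset_apply hD _ hφ,
    tsum_count_eq_card, ENNReal.toReal_div, ENNReal.toReal_natCast, ENNReal.toReal_natCast]
  simp only [cquery, Set.mem_ofPred_eq]

/-- The database listing the values of a tuple, with multiplicity. -/
def tupleDatabase (f : ι → X) : Multiset X := Finset.univ.val.map f

lemma card_tupleDatabase (f : ι → X) : (tupleDatabase f).card = Fintype.card ι :=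
  Multiset.card_map _ _

lemma cquery_tupleDatabase (φ : X → Bool) (f : ι → X) :
    cquery φ (tupleDatabase f) =
      (∑ i, {x | φ x = true}.indicator 1 (f i)) / Fintype.card ι := by
  rw [cquery, card_tupleDatabase, ← Multiset.countP_eq_card_filter, tupleDatabase,
    Multiset.countP_map]
  simp only [Set.indicator_apply, Set.mem_ofPred_eq, Pi.one_apply, Finset.sum_boole]
  rfl

/-- The answers of a database to all the queries of a class `C`. The sup distance between two such
vectors is the worst-case disagreement of the databases over `C`. -/
noncomputable def queryAnswers (C : Finset (X → Bool)) (D : Multiset X) : C → ℝ :=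
  fun φ ↦ cquery φ D

lemma dist_queryAnswers_le_iff {C : Finset (X → Bool)} {D D' : Multiset X} {r : ℝ} (hr : 0 ≤ r) :
    dist (queryAnswers C D) (queryAnswers C D') ≤ r ↔
      ∀ φ ∈ C, |cquery φ D - cquery φ D'| ≤ r := by
  simp only [dist_pi_le_iff hr, queryAnswers, Real.dist_eq, Subtype.forall]

lemma dist_queryAnswers_le_of_neighbor (C : Finset (X → Bool)) {D D' : Multiset X}
    (h : Neighbor D D') : dist (queryAnswers C D) (queryAnswers C D') ≤ 1 / D.card :=
  (dist_queryAnswers_le_iff (by positivity)).2 fun φ _ ↦ abs_cquery_sub_le_of_neighbor φ h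

lemma exists_dist_queryAnswers_tupleDatabase_le {C : Finset (X → Bool)} {D : Multiset X}
    (hD : D ≠ 0) {α : ℝ} (hα : 0 ≤ α)
    (hC : C.card * (2 * Real.exp (-2 * (Fintype.card ι * α ^ 2))) < 1) :
    ∃ f : ι → X, dist (queryAnswers C (tupleDatabase f)) (queryAnswers C D) ≤ α := by
  let : MeasurableSpace X := ⊤
  have hmeas (φ : X → Bool) : MeasurableSet {x | φ x = true} := trivial
  set m : ℝ := (Fintype.card ι : ℝ) with hm
  have hexp : -2 * (m * α) ^ 2 / (m * (1 - 0) ^ 2) = -2 * (m * α ^ 2) := by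
    rcases eq_or_ne m 0 with h0 | h0
    · simp [h0]
    · field_simp
      ring
  obtain ⟨f, hf⟩ := exists_forall_abs_sum_sub_integral_lt (ι := ι)
    (μ := (PMF.ofMultiset D hD).toMeasure) (s := C) (t := m * α) (a := 0) (b := 1)
    (g := fun φ ↦ {x | φ x = true}.indicator 1)
    (fun φ _ ↦ (measurable_one.indicator (hmeas φ)).aemeasurable)
    (fun φ _ ↦ .of_forall fun x ↦
      ⟨Set.indicator_nonneg (by simp) x, Set.indicator_le_self' (by simp) x⟩)
    (by positivity) (by rwa [hexp])
  refine ⟨f, (dist_queryAnswers_le_iff hα).2 fun φ hφ ↦ ?_⟩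
  have hlt := hf φ hφ
  have hm0 : 0 < m := pos_of_mul_pos_left ((abs_nonneg _).trans_lt hlt) hα
  rw [integral_indicator_ofMultiset_eq_cquery (hmeas φ), Finset.sum_sub_distrib, Finset.sum_const,
    Finset.card_univ, nsmul_eq_mul, ← hm] at hlt
  rw [cquery_tupleDatabase, ← hm, div_sub' hm0.ne', abs_div, abs_of_pos hm0, div_le_iff₀' hm0]
  exact hlt.le

end Database

section NetMechanism

variable {X : Type*} [Fintype X] [Nonempty X]

/-- The net mechanism of Blum, Ligett and Roth: the exponential mechanism over the databases of size
`m`, with `κ` times the worst-case error over `C` as loss. It samples tuples, so a database is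
weighted by the number of its orderings. -/
noncomputable def netMechanism (C : Finset (X → Bool)) (m : ℕ) (κ : ℝ) (D : Multiset X) :
    PMF (Multiset X) :=
  (expMechanism fun f : Fin m → X ↦
    κ * dist (queryAnswers C (tupleDatabase f)) (queryAnswers C D)).map tupleDatabase

variable {C : Finset (X → Bool)} {m : ℕ} {κ : ℝ}

lemma card_of_mem_support_netMechanism {D D' : Multiset X}
    (h : D' ∈ (netMechanism C m κ D).support) : D'.card = m := by
  obtain ⟨f, -, rfl⟩ := (PMF.mem_support_map_iff _ _ _).1 h
  rw [card_tupleDatabase, Fintype.card_fin]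

lemma toOuterMeasure_netMechanism_le_exp_mul_of_neighbor (hκ : 0 ≤ κ) {D D' : Multiset X}
    (h : Neighbor D D') (E : Set (Multiset X)) :
    (netMechanism C m κ D).toOuterMeasure E ≤
      ENNReal.ofReal (Real.exp (2 * (κ / D.card))) *
        (netMechanism C m κ D').toOuterMeasure E := by
  rw [netMechanism, netMechanism, PMF.toOuterMeasure_map_apply, PMF.toOuterMeasure_map_apply]
  refine toOuterMeasure_le_mul_of_forall_le_mul (expMechanism_le_exp_mul fun f ↦ ?_) _
  rw [← mul_sub, abs_mul, abs_of_nonneg hκ, div_eq_mul_one_div, dist_comm,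
    dist_comm _ (queryAnswers C D')]
  gcongr
  exact (abs_dist_sub_le _ _ _).trans (dist_queryAnswers_le_of_neighbor C h)

lemma one_sub_le_toOuterMeasure_netMechanism_dist_le (hκ : 0 < κ) {D : Multiset X} {α β : ℝ}
    (hα : ∃ f : Fin m → X, dist (queryAnswers C (tupleDatabase f)) (queryAnswers C D) ≤ α) :
    1 - ENNReal.ofReal (Fintype.card X ^ m * Real.exp (-(κ * (β - α)))) ≤
      (netMechanism C m κ D).toOuterMeasure
        {D' | dist (queryAnswers C D') (queryAnswers C D) ≤ β} := by
  obtain ⟨f, hf⟩ := hα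
  rw [netMechanism, PMF.toOuterMeasure_map_apply]
  have hutil := one_sub_le_toOuterMeasure_expMechanism_le (fun f : Fin m → X ↦
    κ * dist (queryAnswers C (tupleDatabase f)) (queryAnswers C D)) f (κ * β)
  simp only [mul_le_mul_iff_right₀ hκ] at hutil
  refine le_trans (tsub_le_tsub_left (ENNReal.ofReal_le_ofReal ?_) 1) hutil
  rw [Fintype.card_fun, Fintype.card_fin, Nat.cast_pow, ← mul_sub, ← mul_neg, neg_sub]
  gcongr

end NetMechanism

lemma mul_two_mul_exp_lt_one {k r : ℝ} (hk : 2 < k) (hr : Real.log k ≤ r) :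
    k * (2 * Real.exp (-2 * r)) < 1 := by
  have hk0 : 0 < k := two_pos.trans hk
  have hexp : Real.exp (-2 * r) ≤ (k ^ 2)⁻¹ := by
    rw [← Real.le_log_iff_exp_le (by positivity), Real.log_inv, Real.log_pow]
    push_cast
    linarith
  calc k * (2 * Real.exp (-2 * r)) ≤ k * (2 * (k ^ 2)⁻¹) := by gcongr
    _ = 2 / k := by field_simp
    _ < 1 := (div_lt_one hk0).2 hk

lemma pow_mul_exp_neg_le {N δ x : ℝ} (hN : 0 < N) (hδ : 0 < δ) {m : ℕ}
    (h : m * Real.log N + Real.log (1 / δ) ≤ x) : N ^ m * Real.exp (-x) ≤ δ := by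
  rw [one_div, Real.log_inv] at h
  calc N ^ m * Real.exp (-x) = Real.exp (m * Real.log N - x) := by
        rw [sub_eq_add_neg, Real.exp_add, Real.exp_nat_mul, Real.exp_log hN]
    _ ≤ Real.exp (Real.log δ) := Real.exp_le_exp.2 (by linarith)
    _ = δ := Real.exp_log hδ

theorem stmt6 {X : Type*} [Fintype X] [Nonempty X]
    (C : Finset (X → Bool)) (hC : 3 ≤ C.card)
    (ε δ α : ℝ) (hε : 0 < ε) (hδ0 : 0 < δ) (hδ1 : δ < 1) (hα0 : 0 < α) (hα1 : α < 1)
    (n : ℕ) (hn : 1 ≤ n)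
    (hbig : α ≥ 2 / (ε * n) *
      ((⌈Real.log (C.card : ℝ) / α ^ 2⌉₊ : ℝ) * Real.log (Fintype.card X : ℝ) +
        Real.log (1 / δ))) :
    ∃ M : Multiset X → PMF (Multiset X),
      -- M is ε-differentially private
      (∀ D D'' : Multiset X, D.card = n → D''.card = n → Neighbor D D'' →
        ∀ E : Set (Multiset X),
          (M D).toOuterMeasure E ≤ ENNReal.ofReal (Real.exp ε) * (M D'').toOuterMeasure E) ∧
      -- M outputs databases of size ⌈ln|C| / α²⌉
      (∀ D : Multiset X, ∀ D' ∈ (M D).support,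
        D'.card = ⌈Real.log (C.card : ℝ) / α ^ 2⌉₊) ∧
      -- M is (2α, δ)-useful for C
      (∀ D : Multiset X, D.card = n →
        1 - ENNReal.ofReal δ ≤
          (M D).toOuterMeasure {D' | ∀ φ ∈ C, |cquery φ D' - cquery φ D| ≤ 2 * α}) := by
  set m := ⌈Real.log (C.card : ℝ) / α ^ 2⌉₊
  have hn0 : (0 : ℝ) < n := Nat.cast_pos.2 hn
  have hκ : 0 < ε * n / 2 := by positivity
  have hsample : C.card * (2 * Real.exp (-2 * (Fintype.card (Fin m) * α ^ 2))) < 1 := by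
    refine mul_two_mul_exp_lt_one (by exact_mod_cast hC) ?_
    rw [Fintype.card_fin, ← div_le_iff₀ (by positivity)]
    exact Nat.le_ceil _
  have hfail : (Fintype.card X : ℝ) ^ m * Real.exp (-(ε * n / 2 * (2 * α - α))) ≤ δ := by
    refine pow_mul_exp_neg_le (Nat.cast_pos.2 Fintype.card_pos) hδ0 ?_
    rw [ge_iff_le, div_mul_eq_mul_div, div_le_iff₀ (by positivity)] at hbig
    linarith
  refine ⟨netMechanism C m (ε * n / 2), fun D D'' hD _ hN E ↦ ?_,
    fun D D' ↦ card_of_mem_support_netMechanism, fun D hD ↦ ?_⟩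
  · have hbudget : 2 * (ε * n / 2 / D.card) = ε := by rw [hD]; field_simp
    simpa only [hbudget] using toOuterMeasure_netMechanism_le_exp_mul_of_neighbor hκ.le hN E
  · have hD0 : D ≠ 0 := Multiset.card_pos.1 (by omega)
    simp only [← dist_queryAnswers_le_iff (C := C) (mul_nonneg zero_le_two hα0.le)]
    exact (tsub_le_tsub_left (ENNReal.ofReal_le_ofReal hfail) 1).trans
      (one_sub_le_toOuterMeasure_netMechanism_dist_le hκ
        (exists_dist_queryAnswers_tupleDatabase_le hD0 hα0.le hsample))
end

section
/- Let X be a domain, let P be a class of predicates on X that shatters a set S ⊆ X of even cardinality d ≥ 2, and let D_S = {T ⊆ S : |T| = d/2}. For each T ∈ D_S fix a predicate φ_T ∈ P with {x ∈ S : φ_T(x) = 1} = T, and let Q_T be its counting query; let C be a class of counting queries containing all Q_T for T ∈ D_S. Let M be a mechanism mapping size-(d/2) databases over X to databases over X that is (α, δ)-useful for C, where 0 < δ < 1. Then for every T ∈ D_S, with probability at least 1 − δ over D̂ = M(T), the set T' ∈ D_S minimizing v_{T''} = Q_{T''}(T'') − Q_{T''}(D̂) over T'' ∈ D_S satisfies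 |T Δ T'| ≤ 2dα. -/
attribute [local instance] Classical.propDecidable

/- The predicate `φ T` holds on all of `T`, while `φ T'` holds on it only at the points of
`T ∩ T'`, so on the database `T` the two queries differ by `|T \ T'| / |T|`. As every `φ T` has the
same value on `T` itself, minimizing the gap `v` amounts to maximizing the answer on `D̂`; hence the
minimizer `T'` satisfies `φ T' (D̂) ≥ φ T (D̂)`, and two applications of `α`-accuracy bound the
difference on `T` by `2α`. When `|T| = |T'|`, the symmetric difference has size
`2 |T \ T'| ≤ 4α|T|`. -/

open Finset
open scoped symmDiff

/-- `(α, δ)`-usefulness of the mechanism `M`, on databases of size `n`, for the class of counting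
queries of the predicates in `C`. A query is represented by its predicate, and the probability is
bounded below in `ℝ≥0∞`, where subtraction is truncated. -/
def IsUseful {X : Type*} (M : Multiset X → PMF (Multiset X)) (C : Set (X → Bool)) (n : ℕ)
    (α δ : ℝ) : Prop :=
  ∀ D : Multiset X, D.card = n →
    1 - ENNReal.ofReal δ ≤
      (M D).toOuterMeasure {Dhat | ∀ ψ ∈ C, |cquery ψ Dhat - cquery ψ D| ≤ α}

section

variable {X : Type*} {φ ψ : X → Bool} {α : ℝ}

theorem cquery_le_cquery_add_two_mul {D Dhat : Multiset X}
    (hφ : |cquery φ Dhat - cquery φ D| ≤ α) (hψ : |cquery ψ Dhat - cquery ψ D| ≤ α)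
    (hle : cquery φ Dhat ≤ cquery ψ Dhat) : cquery φ D ≤ cquery ψ D + 2 * α := by
  have hlower := (abs_le.mp hφ).1
  have hupper := (abs_le.mp hψ).2
  linarith

variable {T T' : Finset X}

-- The value is left as a quotient because it is `0`, not `1`, when `T = ∅`.
theorem cquery_val_eq_card_div_card (hφ : ∀ x ∈ T, φ x = true) :
    cquery φ T.val = (#T : ℝ) / #T :=
  congrArg (fun U : Finset X ↦ (#U : ℝ) / #T) (filter_true_of_mem hφ)

variable [DecidableEq X]

theorem card_symmDiff_eq_two_mul_card_sdiff (h : #T = #T') : #(T ∆ T') = 2 * #(T \ T') := by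
  rw [Finset.symmDiff_def, card_union_of_disjoint disjoint_sdiff_sdiff, ← card_sdiff_comm h,
    two_mul]

theorem cquery_val_eq_card_inter_div (hφ : ∀ x ∈ T, (φ x = true ↔ x ∈ T')) :
    cquery φ T.val = (#(T ∩ T') : ℝ) / #T :=
  congrArg (fun U : Finset X ↦ (#U : ℝ) / #T) ((filter_congr hφ).trans filter_mem_eq_inter)

theorem card_sdiff_eq_card_mul_cquery_sub (hφ : ∀ x ∈ T, φ x = true)
    (hψ : ∀ x ∈ T, (ψ x = true ↔ x ∈ T')) :
    (#(T \ T') : ℝ) = #T * (cquery φ T.val - cquery ψ T.val) := by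
  have hsplit : (#(T \ T') : ℝ) + #(T ∩ T') = #T := mod_cast card_sdiff_add_card_inter T T'
  have hempty : (#T : ℝ) = 0 → (#(T \ T') : ℝ) = 0 := fun h ↦ by
    rw [card_eq_zero.mp (Nat.cast_eq_zero.mp h), empty_sdiff, card_empty, Nat.cast_zero]
  rw [cquery_val_eq_card_div_card hφ, cquery_val_eq_card_inter_div hψ, ← sub_div,
    ← eq_sub_of_add_eq hsplit, mul_div_cancel_of_imp' hempty]

theorem card_symmDiff_le_of_cquery_sub_le {Dhat : Multiset X} (hcard : #T = #T')
    (hφ : ∀ x ∈ T, φ x = true) (hψ : ∀ x ∈ T, (ψ x = true ↔ x ∈ T'))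
    (hψ' : ∀ x ∈ T', ψ x = true)
    (haccφ : |cquery φ Dhat - cquery φ T.val| ≤ α)
    (haccψ : |cquery ψ Dhat - cquery ψ T.val| ≤ α)
    (hgap : cquery ψ T'.val - cquery ψ Dhat ≤ cquery φ T.val - cquery φ Dhat) :
    (#(T ∆ T') : ℝ) ≤ 4 * #T * α := by
  have hself : cquery ψ T'.val = cquery φ T.val := by
    rw [cquery_val_eq_card_div_card hψ', cquery_val_eq_card_div_card hφ, hcard]
  have hle : cquery φ Dhat ≤ cquery ψ Dhat := by linarith
  have hdiff : cquery φ T.val - cquery ψ T.val ≤ 2 * α :=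
    sub_le_iff_le_add'.mpr (cquery_le_cquery_add_two_mul haccφ haccψ hle)
  calc (#(T ∆ T') : ℝ)
      = 2 * #(T \ T') := mod_cast card_symmDiff_eq_two_mul_card_sdiff hcard
    _ = 2 * (#T * (cquery φ T.val - cquery ψ T.val)) := by
      rw [card_sdiff_eq_card_mul_cquery_sub hφ hψ]
    _ ≤ 2 * (#T * (2 * α)) := by gcongr
    _ = 4 * #T * α := by ring

end

theorem stmt9_general {X : Type*} [DecidableEq X] (F : Set (Finset X)) (k : ℕ)
    (hF : ∀ T ∈ F, #T = k) (φ : Finset X → X → Bool)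
    (hφ : ∀ T ∈ F, ∀ T' ∈ F, ∀ x ∈ T', (φ T x = true ↔ x ∈ T))
    (C : Set (X → Bool)) (hC : ∀ T ∈ F, φ T ∈ C)
    (M : Multiset X → PMF (Multiset X)) (α δ : ℝ) (hM : IsUseful M C k α δ) :
    ∀ T ∈ F, 1 - ENNReal.ofReal δ ≤ (M T.val).toOuterMeasure
      {Dhat | ∀ T' ∈ F,
        IsMinOn (fun T'' ↦ cquery (φ T'') T''.val - cquery (φ T'') Dhat) F T' →
          (#(T ∆ T') : ℝ) ≤ 4 * k * α} := by
  intro T hT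
  refine (hM T.val (hF T hT)).trans (MeasureTheory.measure_mono ?_)
  intro Dhat hacc T' hT' hmin
  rw [← hF T hT]
  exact card_symmDiff_le_of_cquery_sub_le ((hF T hT).trans (hF T' hT').symm)
    (fun x hx ↦ (hφ T hT T hT x hx).mpr hx) (hφ T' hT' T hT)
    (fun x hx ↦ (hφ T' hT' T' hT' x hx).mpr hx)
    (hacc (φ T) (hC T hT)) (hacc (φ T') (hC T' hT')) (hmin hT)

theorem stmt9 {X : Type*} [DecidableEq X] (P : Set (X → Bool)) (S : Finset X)
    (d : ℕ) (hS : S.card = d) (hd : 2 ≤ d) (hde : Even d)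
    (hshatter : Shatters P S)
    -- for each `T ∈ D_S` a fixed predicate `φc T ∈ P` picking out exactly `T` inside `S`
    (φc : Finset X → (X → Bool))
    (hφc : ∀ T ⊆ S, T.card = d / 2 →
      φc T ∈ P ∧ ∀ x ∈ S, (φc T x = true ↔ x ∈ T))
    -- a class C of counting queries containing all the Q_T
    (C : Set (X → Bool)) (hPC : ∀ T ⊆ S, T.card = d / 2 → φc T ∈ C)
    (M : Multiset X → PMF (Multiset X)) (α δ : ℝ) (hδ0 : 0 < δ) (hδ1 : δ < 1)
    -- M is (α, δ)-useful for C on size-(d/2) databases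
    (huseful : ∀ D : Multiset X, D.card = d / 2 →
      1 - ENNReal.ofReal δ ≤
        (M D).toOuterMeasure {Dhat | ∀ ψ ∈ C, |cquery ψ Dhat - cquery ψ D| ≤ α}) :
    ∀ T ⊆ S, T.card = d / 2 →
      1 - ENNReal.ofReal δ ≤
        (M T.val).toOuterMeasure
          {Dhat | ∀ T' ⊆ S, T'.card = d / 2 →
            (∀ T'' ⊆ S, T''.card = d / 2 →
              cquery (φc T') T'.val - cquery (φc T') Dhat ≤
                cquery (φc T'') T''.val - cquery (φc T'') Dhat) →
            ((symmDiff T T').card : ℝ) ≤ 2 * d * α} := by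
  have htwo_mul : (2 * d * α : ℝ) = 4 * (d / 2 : ℕ) * α := by
    rw [Nat.cast_div_charZero hde.two_dvd]; ring
  simpa only [htwo_mul, Set.mem_ofPred_eq, and_imp, isMinOn_iff] using
    stmt9_general {T | T ⊆ S ∧ #T = d / 2} (d / 2) (fun T hT ↦ hT.2) φc
      (fun T hT T' hT' x hx ↦ (hφc T hT.1 hT.2).2 x (hT'.1 hx)) C
      (fun T hT ↦ hPC T hT.1 hT.2) M α δ huseful
end

section
/- There is a universal constant c > 0 with the following property: for every integer d ≥ 1, every ε > 0, every α ∈ (0,1), every δ ∈ (0,1), and every n ≥ (c · d / (ε α)) · ln(d / (δ α)), there exists an ε-differentially private mechanism mapping size-n databases over the domain {1, 2, …, 2^d} to databases over {1, 2, …, 2^d} that is (α, δ)-useful for the class of all interval queries Q_{[a,b]} with 1 ≤ a ≤ b ≤ 2^d. -/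
attribute [local instance] Classical.propDecidable

/-- The interval query `Q_{[a,b]}`: the fraction of elements `x` of the database (a multiset
of naturals) with `a ≤ x ≤ b`. -/
noncomputable def iquery (a b : ℕ) (D : Multiset ℕ) : ℝ :=
  ((D.filter (fun x => a ≤ x ∧ x ≤ b)).card : ℝ) / (D.card : ℝ)

/-!
Shift the data to `{0, …, 2 ^ d - 1}` and spend the privacy budget in two rounds. The first round
releases noisy counts of all dyadic intervals and flags those whose noisy count exceeds `2 * t`.
Cut the domain at the left endpoints of the dyadic intervals all of whose proper ancestors are
flagged: between any point and the last cut before it there are then few elements. The flags matter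
only below a heavy interval, and there are few heavy intervals since each level has at most
`n / t` of them, so that both the union bound over the flags and the number of cuts are of order
`d * n / t` rather than `2 ^ d`.

The second round releases noisy counts of the dyadic intervals of cut ranks. Summing them over the
binary digits of the rank of a point estimates the number of elements below it, and the failure
probabilities of these sums again depend on the number of cuts only, because a rank `j` has at
most `Nat.log 2 j + 1` binary digits. Any database that fits all the estimated prefix counts answers
all the interval queries accurately. Each element lies in `d` intervals of either round, which is
why the rate `ε / (8 * d)` of the noise gives `ε`-differential privacy.
-/
open Finset
open scoped ENNReal

lemma ofReal_exp_add (x y : ℝ) :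
    ENNReal.ofReal (Real.exp (x + y)) =
      ENNReal.ofReal (Real.exp x) * ENNReal.ofReal (Real.exp y) := by
  rw [Real.exp_add, ENNReal.ofReal_mul (Real.exp_pos x).le]

lemma ofReal_exp_sum {ι : Type*} (s : Finset ι) (f : ι → ℝ) :
    ENNReal.ofReal (Real.exp (∑ i ∈ s, f i)) = ∏ i ∈ s, ENNReal.ofReal (Real.exp (f i)) := by
  rw [Real.exp_sum, ENNReal.ofReal_prod_of_nonneg fun i _ => (Real.exp_pos _).le]

lemma ofReal_exp_le_ofReal_exp {x y : ℝ} (h : x ≤ y) :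
    ENNReal.ofReal (Real.exp x) ≤ ENNReal.ofReal (Real.exp y) :=
  ENNReal.ofReal_le_ofReal (Real.exp_le_exp.2 h)

lemma one_le_ofReal_exp {x : ℝ} (h : 0 ≤ x) : 1 ≤ ENNReal.ofReal (Real.exp x) :=
  ENNReal.one_le_ofReal.2 (Real.one_le_exp h)

section Privacy

variable {X Y R R' : Type*}

lemma Neighbor.map {D D' : Multiset X} (h : Neighbor D D') (f : X → Y) :
    Neighbor (D.map f) (D'.map f) := by
  obtain ⟨D₀, x, y, rfl, rfl⟩ := h
  exact ⟨D₀.map f, f x, f y, Multiset.map_cons .., Multiset.map_cons ..⟩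

/-- `ε`-differential privacy of the mechanism `M`, stated for single outcomes; for discrete
distributions this is equivalent to the inequality for all events. -/
def PureDP (ε : ℝ) (M : Multiset X → PMF R) : Prop :=
  ∀ ⦃D D' : Multiset X⦄, Neighbor D D' → ∀ r, M D r ≤ ENNReal.ofReal (Real.exp ε) * M D' r

namespace PureDP

variable {ε ε' : ℝ} {M : Multiset X → PMF R}

lemma toOuterMeasure_le (hM : PureDP ε M) {D D' : Multiset X} (h : Neighbor D D') (E : Set R) :
    (M D).toOuterMeasure E ≤ ENNReal.ofReal (Real.exp ε) * (M D').toOuterMeasure E := by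
  rw [PMF.toOuterMeasure_apply, PMF.toOuterMeasure_apply, ← ENNReal.tsum_mul_left]
  refine ENNReal.tsum_le_tsum fun r => ?_
  by_cases hr : r ∈ E
  · simpa only [Set.indicator_of_mem hr] using hM h r
  · simp only [Set.indicator_of_notMem hr, zero_le]

lemma const (hε : 0 ≤ ε) (p : PMF R) : PureDP ε fun _ : Multiset X => p :=
  fun _ _ _ _ => le_mul_of_one_le_left zero_le (one_le_ofReal_exp hε)

lemma bind (hM : PureDP ε M) {K : Multiset X → R → PMF R'}
    (hK : ∀ r, PureDP ε' fun D => K D r) : PureDP (ε + ε') fun D => (M D).bind (K D) := by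
  intro D D' h s
  rw [PMF.bind_apply, PMF.bind_apply, ← ENNReal.tsum_mul_left, ofReal_exp_add]
  refine ENNReal.tsum_le_tsum fun r => (mul_le_mul' (hM h r) (hK r h s)).trans_eq ?_
  rw [mul_mul_mul_comm]

lemma map (hM : PureDP ε M) (f : R → R') : PureDP ε fun D => (M D).map f := by
  have h := hM.bind fun r => const le_rfl (PMF.pure (f r))
  rw [add_zero] at h
  exact h

lemma comp_map (hM : PureDP ε M) (f : Y → X) : PureDP ε fun D => M (D.map f) :=
  fun _ _ h => hM (h.map f)

end PureDP

end Privacy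

section Probability

variable {α β V A : Type*}

lemma toOuterMeasure_bind_le (p : PMF α) (K : α → PMF β) (B : Set α) (S : Set β) {u v : ℝ≥0∞}
    (hB : p.toOuterMeasure B ≤ u) (hS : ∀ a ∉ B, (K a).toOuterMeasure S ≤ v) :
    (p.bind K).toOuterMeasure S ≤ u + v := by
  have pointwise (a : α) : p a * (K a).toOuterMeasure S ≤ B.indicator p a + p a * v := by
    by_cases ha : a ∈ B
    · have hS_one : (K a).toOuterMeasure S ≤ 1 :=
        (MeasureTheory.measure_mono (Set.subset_univ S)).trans_eq
          (((K a).toOuterMeasure_apply_eq_one_iff _).2 (Set.subset_univ _))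
      rw [Set.indicator_of_mem ha]
      exact (mul_le_of_le_one_right' hS_one).trans le_self_add
    · rw [Set.indicator_of_notMem ha, zero_add]
      gcongr
      exact hS a ha
  calc (p.bind K).toOuterMeasure S = ∑' a, p a * (K a).toOuterMeasure S :=
        PMF.toOuterMeasure_bind_apply ..
    _ ≤ ∑' a, (B.indicator p a + p a * v) := ENNReal.tsum_le_tsum pointwise
    _ = p.toOuterMeasure B + v := by
        rw [ENNReal.tsum_add, ENNReal.tsum_mul_right, p.tsum_coe, one_mul,
          PMF.toOuterMeasure_apply]
    _ ≤ u + v := by gcongr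

lemma one_le_toOuterMeasure_add_compl (p : PMF α) (S : Set α) :
    1 ≤ p.toOuterMeasure S + p.toOuterMeasure Sᶜ := by
  have h_univ : p.toOuterMeasure Set.univ = 1 :=
    (p.toOuterMeasure_apply_eq_one_iff _).2 (Set.subset_univ _)
  rw [← h_univ, ← Set.union_compl_self S]
  exact MeasureTheory.measure_union_le S Sᶜ

variable [Fintype V] [Fintype A]

lemma sum_pmf_eq_one [Fintype α] (p : PMF α) : ∑ a, p a = 1 :=
  (tsum_fintype _).symm.trans p.tsum_coe

lemma toOuterMeasure_le_sum_mul [Fintype α] (p : PMF α) {S : Set α} {f : α → ℝ≥0∞}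
    (hf : ∀ a ∈ S, 1 ≤ f a) : p.toOuterMeasure S ≤ ∑ a, p a * f a := by
  rw [PMF.toOuterMeasure_apply_fintype]
  refine sum_le_sum fun a _ => ?_
  by_cases ha : a ∈ S
  · simpa only [Set.indicator_of_mem ha] using le_mul_of_one_le_right' (hf a ha)
  · simp only [Set.indicator_of_notMem ha, zero_le]

/-- The law of a family of independent random variables whose `v`-th member has law `p v`. -/
noncomputable def productPMF (p : V → PMF A) : PMF (V → A) :=
  PMF.ofFintype (fun ω => ∏ v, p v (ω v)) <| by
    rw [← Fintype.piFinset_univ, ← prod_univ_sum (fun _ => univ) fun v a => p v a]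
    exact prod_eq_one fun v _ => sum_pmf_eq_one (p v)

lemma productPMF_apply (p : V → PMF A) (ω : V → A) : productPMF p ω = ∏ v, p v (ω v) := rfl

lemma sum_productPMF_mul_prod (p : V → PMF A) (f : V → A → ℝ≥0∞) :
    ∑ ω, productPMF p ω * ∏ v, f v (ω v) = ∏ v, ∑ a, p v a * f v a := by
  simp only [productPMF_apply, ← prod_mul_distrib]
  rw [← Fintype.piFinset_univ, ← prod_univ_sum (fun _ => univ) fun v a => p v a * f v a]

lemma productPMF_le (p q : V → PMF A) (κ : V → ℝ)
    (h : ∀ v a, p v a ≤ ENNReal.ofReal (Real.exp (κ v)) * q v a) (ω : V → A) :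
    productPMF p ω ≤ ENNReal.ofReal (Real.exp (∑ v, κ v)) * productPMF q ω := by
  rw [productPMF_apply, productPMF_apply, ofReal_exp_sum, ← prod_mul_distrib]
  exact prod_le_prod' fun v _ => h v (ω v)

end Probability

section Noise

lemma normalize_le {α : Type*} {f g : α → ℝ≥0∞} {K : ℝ≥0∞} (hf₀ : tsum f ≠ 0) (hf : tsum f ≠ ∞)
    (hg₀ : tsum g ≠ 0) (hg : tsum g ≠ ∞) (hfg : ∀ a, f a ≤ K * g a) (hgf : ∀ a, g a ≤ K * f a)
    (a : α) : PMF.normalize f hf₀ hf a ≤ K * K * PMF.normalize g hg₀ hg a := by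
  have tsum_le : tsum g ≤ K * tsum f := by
    rw [← ENNReal.tsum_mul_left]
    exact ENNReal.tsum_le_tsum hgf
  have inv_le : (tsum f)⁻¹ ≤ K * (tsum g)⁻¹ :=
    calc (tsum f)⁻¹ = tsum g * ((tsum g)⁻¹ * (tsum f)⁻¹) := by
          rw [← mul_assoc, ENNReal.mul_inv_cancel hg₀ hg, one_mul]
      _ ≤ K * tsum f * ((tsum g)⁻¹ * (tsum f)⁻¹) := by gcongr
      _ = K * (tsum g)⁻¹ * (tsum f * (tsum f)⁻¹) := by ring
      _ = K * (tsum g)⁻¹ := by rw [ENNReal.mul_inv_cancel hf₀ hf, mul_one]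
  rw [PMF.normalize_apply, PMF.normalize_apply]
  calc f a * (tsum f)⁻¹ ≤ K * g a * (K * (tsum g)⁻¹) := mul_le_mul' (hfg a) inv_le
    _ = K * K * (g a * (tsum g)⁻¹) := mul_mul_mul_comm ..

lemma sum_comp_le_mul_sum {α β : Type*} [Fintype α] [Fintype β] [DecidableEq β] (φ : α → β) (N : ℕ)
    (hφ : ∀ b, #{a | φ a = b} ≤ N) (f : β → ℝ≥0∞) : ∑ a, f (φ a) ≤ N * ∑ b, f b := by
  rw [← sum_fiberwise univ φ, mul_sum]
  refine sum_le_sum fun b _ => ?_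
  have fiber_sum : ∑ a with φ a = b, f (φ a) = #{a | φ a = b} * f b := by
    rw [← nsmul_eq_mul]
    exact sum_eq_card_nsmul fun a ha => by rw [(mem_filter.1 ha).2]
  rw [fiber_sum]
  gcongr
  exact hφ b

/-- The unnormalized density of two-sided geometric noise of rate `η` around `c`. -/
noncomputable def geometricWeight (n : ℕ) (η : ℝ) (c : ℕ) (a : Fin (n + 1)) : ℝ≥0∞ :=
  ENNReal.ofReal (Real.exp (-(η * Nat.dist a c)))

lemma tsum_geometricWeight_ne_zero (n : ℕ) (η : ℝ) (c : ℕ) : tsum (geometricWeight n η c) ≠ 0 :=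
  fun h => (ENNReal.ofReal_pos.2 (Real.exp_pos _)).ne' (ENNReal.tsum_eq_zero.1 h 0)

lemma tsum_geometricWeight_ne_top (n : ℕ) (η : ℝ) (c : ℕ) : tsum (geometricWeight n η c) ≠ ∞ := by
  rw [tsum_fintype]
  exact ENNReal.sum_ne_top.2 fun _ _ => ENNReal.ofReal_ne_top

/-- Two-sided geometric noise of rate `η` around `c`, conditioned to lie in `{0, …, n}`: the
discrete analogue of the truncated Laplace distribution. -/
noncomputable def geometricNoise (n : ℕ) (η : ℝ) (c : ℕ) : PMF (Fin (n + 1)) :=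
  PMF.normalize (geometricWeight n η c) (tsum_geometricWeight_ne_zero n η c)
    (tsum_geometricWeight_ne_top n η c)

variable {n : ℕ} {η : ℝ}

lemma geometricWeight_le (hη : 0 ≤ η) (c c' : ℕ) (a : Fin (n + 1)) :
    geometricWeight n η c a ≤
      ENNReal.ofReal (Real.exp (η * Nat.dist c c')) * geometricWeight n η c' a := by
  rw [geometricWeight, geometricWeight, ← ofReal_exp_add]
  refine ofReal_exp_le_ofReal_exp ?_
  have triangle : (Nat.dist a c' : ℝ) ≤ Nat.dist a c + Nat.dist c c' := by
    exact_mod_cast Nat.dist.triangle_inequality a c c'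
  linarith [mul_le_mul_of_nonneg_left triangle hη]

lemma geometricNoise_le (hη : 0 ≤ η) (c c' : ℕ) (a : Fin (n + 1)) :
    geometricNoise n η c a ≤
      ENNReal.ofReal (Real.exp (2 * η * Nat.dist c c')) * geometricNoise n η c' a := by
  rw [show 2 * η * Nat.dist c c' = η * Nat.dist c c' + η * Nat.dist c c' by ring, ofReal_exp_add]
  refine normalize_le _ _ _ _ (geometricWeight_le hη c c') (fun b => ?_) a
  rw [Nat.dist_comm]
  exact geometricWeight_le hη c' c b

/-- The integer midpoint of `a` and `c`, rounded towards `c`. -/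
def roundedMidpoint {n : ℕ} (c : Fin (n + 1)) (a : Fin (n + 1)) : Fin (n + 1) :=
  if c ≤ a then ⟨(a + c) / 2, by omega⟩ else ⟨(a + c + 1) / 2, by omega⟩

lemma two_mul_dist_roundedMidpoint_le (c a : Fin (n + 1)) :
    2 * Nat.dist (roundedMidpoint c a) c ≤ Nat.dist a c := by
  unfold roundedMidpoint Nat.dist
  split_ifs with h <;> simp only [Fin.le_def] at h ⊢ <;> omega

lemma card_roundedMidpoint_fiber_le (c b : Fin (n + 1)) :
    #{a | roundedMidpoint c a = b} ≤ 3 := by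
  have fiber_bounds {a : Fin (n + 1)} (h : roundedMidpoint c a = b) :
      2 * b.val ≤ a + c + 1 ∧ a + c ≤ 2 * b.val + 1 := by
    unfold roundedMidpoint at h
    split_ifs at h <;> simp only [← h] <;> omega
  rw [← card_range 3]
  refine card_le_card_of_injOn (fun a => a.val + c + 1 - 2 * b) (fun a ha => ?_)
    fun a ha a' ha' h => ?_
  · have := fiber_bounds (mem_filter.1 ha).2
    exact mem_coe.2 (mem_range.2 (by dsimp only; omega))
  · have h₁ := fiber_bounds (mem_filter.1 ha).2
    have h₂ := fiber_bounds (mem_filter.1 ha').2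
    exact Fin.ext (by dsimp only at h; omega)

-- Halving the distance to `c` turns the rate `η / 2` back into `η` and is at most three-to-one.
lemma sum_geometricNoise_mul_exp_le (hη : 0 ≤ η) {c : ℕ} (hc : c ≤ n) :
    ∑ a, geometricNoise n η c a * ENNReal.ofReal (Real.exp (η / 2 * Nat.dist a c)) ≤ 3 := by
  let c' : Fin (n + 1) := ⟨c, Nat.lt_succ_of_le hc⟩
  have weight_le (a : Fin (n + 1)) :
      geometricWeight n η c a * ENNReal.ofReal (Real.exp (η / 2 * Nat.dist a c)) ≤
        geometricWeight n η c (roundedMidpoint c' a) := by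
    rw [geometricWeight, geometricWeight, ← ofReal_exp_add]
    refine ofReal_exp_le_ofReal_exp ?_
    have halved : (2 * Nat.dist (roundedMidpoint c' a) c : ℝ) ≤ Nat.dist a c := by
      exact_mod_cast two_mul_dist_roundedMidpoint_le c' a
    linarith [mul_le_mul_of_nonneg_left halved hη]
  have sum_weight_le :
      ∑ a, geometricWeight n η c a * ENNReal.ofReal (Real.exp (η / 2 * Nat.dist a c)) ≤
        3 * tsum (geometricWeight n η c) := by
    rw [tsum_fintype]
    exact (sum_le_sum fun a _ => weight_le a).trans
      (sum_comp_le_mul_sum _ 3 (card_roundedMidpoint_fiber_le c') _)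
  simp only [geometricNoise, PMF.normalize_apply, mul_right_comm _ (tsum _)⁻¹]
  rw [← sum_mul, ← div_eq_mul_inv]
  exact ENNReal.div_le_of_le_mul sum_weight_le

end Noise

section NoisyCounts

variable {X V ι : Type*} [Fintype V] {n : ℕ} {η : ℝ}

/-- The mechanism that releases, with independent geometric noise, the number of elements of the
database in each cell `{x | P v x}`. -/
noncomputable def noisyCounts (n : ℕ) (η : ℝ) (P : V → X → Prop) (D : Multiset X) :
    PMF (V → Fin (n + 1)) :=
  productPMF fun v => geometricNoise n η (D.countP (P v))

lemma Neighbor.sum_dist_countP_le {P : V → X → Prop} {L : ℕ} (hP : ∀ x, #{v | P v x} ≤ L)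
    {D D' : Multiset X} (h : Neighbor D D') :
    ∑ v, Nat.dist (D.countP (P v)) (D'.countP (P v)) ≤ 2 * L := by
  obtain ⟨D₀, x, y, rfl, rfl⟩ := h
  calc ∑ v, Nat.dist ((x ::ₘ D₀).countP (P v)) ((y ::ₘ D₀).countP (P v))
      ≤ ∑ v, ((if P v x then 1 else 0) + if P v y then 1 else 0) := by
        refine sum_le_sum fun v _ => ?_
        rw [Multiset.countP_cons, Multiset.countP_cons, Nat.dist]
        omega
    _ = #{v | P v x} + #{v | P v y} := by rw [sum_add_distrib, card_filter, card_filter]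
    _ ≤ 2 * L := by linarith [hP x, hP y]

lemma noisyCounts_pureDP (hη : 0 ≤ η) {P : V → X → Prop} {L : ℕ} (hP : ∀ x, #{v | P v x} ≤ L) :
    PureDP (4 * L * η) (noisyCounts n η P) := by
  intro D D' h ω
  refine (productPMF_le _ _ _ (fun v => geometricNoise_le hη _ (D'.countP (P v))) ω).trans ?_
  rw [noisyCounts]
  gcongr
  have sensitivity : (∑ v, Nat.dist (D.countP (P v)) (D'.countP (P v)) : ℝ) ≤ 2 * L := by
    exact_mod_cast h.sum_dist_countP_le hP
  rw [← mul_sum]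
  linarith [mul_le_mul_of_nonneg_left sensitivity hη]

/-- The total error of the noisy counts `ω` over the cells in `J`. -/
noncomputable def totalError (P : V → X → Prop) (D : Multiset X) (ω : V → Fin (n + 1))
    (J : Finset V) : ℕ :=
  ∑ v ∈ J, Nat.dist (ω v) (D.countP (P v))

lemma noisyCounts_totalError_ge_le (hη : 0 ≤ η) (P : V → X → Prop) {D : Multiset X}
    (hD : D.card ≤ n) (J : Finset V) (t : ℕ) :
    (noisyCounts n η P D).toOuterMeasure {ω | t ≤ totalError P D ω J} ≤
      3 ^ #J * ENNReal.ofReal (Real.exp (-(η / 2 * t))) := by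
  let tilt (v : V) (a : Fin (n + 1)) : ℝ≥0∞ :=
    if v ∈ J then ENNReal.ofReal (Real.exp (η / 2 * Nat.dist a (D.countP (P v)))) else 1
  have prod_tilt (ω : V → Fin (n + 1)) :
      ∏ v, tilt v (ω v) = ENNReal.ofReal (Real.exp (η / 2 * totalError P D ω J)) := by
    rw [totalError, Nat.cast_sum, mul_sum, ofReal_exp_sum, prod_ite_mem, univ_inter]
  have chernoff (ω : V → Fin (n + 1)) (hω : t ≤ totalError P D ω J) :
      1 ≤ ENNReal.ofReal (Real.exp (-(η / 2 * t))) * ∏ v, tilt v (ω v) := by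
    rw [prod_tilt, ← ofReal_exp_add]
    have : (t : ℝ) ≤ totalError P D ω J := by exact_mod_cast hω
    exact one_le_ofReal_exp (by nlinarith)
  have factor_le (v : V) : ∑ a, geometricNoise n η (D.countP (P v)) a * tilt v a ≤
      if v ∈ J then 3 else 1 := by
    by_cases hv : v ∈ J
    · simp only [tilt, if_pos hv]
      exact sum_geometricNoise_mul_exp_le hη ((Multiset.countP_le_card _ _).trans hD)
    · simp only [tilt, if_neg hv, mul_one]
      rw [sum_pmf_eq_one]
  calc (noisyCounts n η P D).toOuterMeasure {ω | t ≤ totalError P D ω J}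
      ≤ ∑ ω, noisyCounts n η P D ω *
          (ENNReal.ofReal (Real.exp (-(η / 2 * t))) * ∏ v, tilt v (ω v)) :=
        toOuterMeasure_le_sum_mul _ chernoff
    _ = (∏ v, ∑ a, geometricNoise n η (D.countP (P v)) a * tilt v a) *
          ENNReal.ofReal (Real.exp (-(η / 2 * t))) := by
        rw [← sum_productPMF_mul_prod, sum_mul]
        exact sum_congr rfl fun ω _ => by rw [noisyCounts]; ring
    _ ≤ (∏ v, if v ∈ J then 3 else 1) * ENNReal.ofReal (Real.exp (-(η / 2 * t))) := by
        gcongr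
        exact factor_le _
    _ = 3 ^ #J * ENNReal.ofReal (Real.exp (-(η / 2 * t))) := by
        rw [prod_ite_mem, univ_inter, prod_const]

lemma noisyCounts_exists_totalError_ge_le (hη : 0 ≤ η) (P : V → X → Prop) {D : Multiset X}
    (hD : D.card ≤ n) (s : Finset ι) (J : ι → Finset V) (t : ℕ) :
    (noisyCounts n η P D).toOuterMeasure {ω | ∃ i ∈ s, t ≤ totalError P D ω (J i)} ≤
      (∑ i ∈ s, 3 ^ #(J i)) * ENNReal.ofReal (Real.exp (-(η / 2 * t))) := by
  have h_union : {ω : V → Fin (n + 1) | ∃ i ∈ s, t ≤ totalError P D ω (J i)} =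
      ⋃ i ∈ s, {ω | t ≤ totalError P D ω (J i)} := by
    ext ω
    simp only [Set.mem_ofPred_eq, Set.mem_iUnion, exists_prop]
  rw [h_union, sum_mul]
  exact (MeasureTheory.measure_biUnion_finset_le s _).trans
    (sum_le_sum fun i _ => noisyCounts_totalError_ge_le hη P hD (J i) t)

end NoisyCounts

section Counting

variable {ι X : Type*} {D : Multiset X}

lemma countP_le_of_imp {p q : X → Prop} [DecidablePred p] [DecidablePred q]
    (h : ∀ x, p x → q x) : D.countP p ≤ D.countP q := by
  rw [Multiset.countP_eq_card_filter, Multiset.countP_eq_card_filter]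
  exact Multiset.card_le_card (Multiset.monotone_filter_right D h)

lemma countP_le_add {p q r : X → Prop} [DecidablePred p] [DecidablePred q] [DecidablePred r]
    (h : ∀ x, p x → q x ∨ r x) : D.countP p ≤ D.countP q + D.countP r := by
  simp only [Multiset.countP_eq_card_filter]
  rw [← Multiset.card_add, Multiset.filter_add_filter, Multiset.card_add]
  exact (Multiset.card_le_card (Multiset.monotone_filter_right D h)).trans (Nat.le_add_right ..)

lemma sum_countP_le {S : Finset ι} {P : ι → X → Prop} {N : ℕ} (hP : ∀ z, #{i ∈ S | P i z} ≤ N)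
    (D : Multiset X) : ∑ i ∈ S, D.countP (P i) ≤ N * D.card := by
  induction D using Multiset.induction with
  | empty => simp only [Multiset.countP_zero, sum_const_zero, Multiset.card_zero, mul_zero, le_rfl]
  | cons a D ih =>
    simp only [Multiset.countP_cons, sum_add_distrib, Multiset.card_cons, mul_add, mul_one]
    rw [← card_filter]
    exact add_le_add ih (hP a)

lemma card_mul_succ_le {S : Finset ι} {P : ι → X → Prop} {N t : ℕ}
    (hP : ∀ z, #{i ∈ S | P i z} ≤ N) (hS : ∀ i ∈ S, t < D.countP (P i)) :
    #S * (t + 1) ≤ N * D.card :=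
  (card_nsmul_le_sum S _ (t + 1) hS).trans (sum_countP_le hP D)

end Counting

section Cuts

variable {d t : ℕ} {D : Multiset ℕ} {F : ℕ → ℕ → Prop}

/-- `z` lies in the dyadic interval `[i * 2 ^ m, (i + 1) * 2 ^ m)`. -/
def InDyadic (m i z : ℕ) : Prop :=
  z / 2 ^ m = i

/-- The flags `F m i` on the dyadic intervals of level `1 ≤ m ≤ d` separate the light intervals
from the heavy ones. Only intervals with a heavy parent are tested, since their number does not
grow with the domain. -/
def FlagsHeavy (D : Multiset ℕ) (d t : ℕ) (F : ℕ → ℕ → Prop) : Prop :=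
  ∀ m < d, ∀ i < 2 ^ d, t < D.countP (InDyadic (m + 2) (i / 2)) →
    (F (m + 1) i → t < D.countP (InDyadic (m + 1) i)) ∧
      (¬F (m + 1) i → D.countP (InDyadic (m + 1) i) ≤ 3 * t)

/-- All the dyadic intervals around `x` of level above `k` are flagged. -/
def FlaggedAbove (F : ℕ → ℕ → Prop) (d k x : ℕ) : Prop :=
  ∀ m, k < m → m ≤ d → F m (x / 2 ^ m)

/-- The left endpoints of the dyadic intervals all of whose proper ancestors are flagged. -/
noncomputable def cuts (F : ℕ → ℕ → Prop) (d : ℕ) : Finset ℕ :=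
  {s ∈ Ico 1 (2 ^ d) | ∃ k, 2 ^ k ∣ s ∧ FlaggedAbove F d k s}

lemma countP_inDyadic_succ_eq_card (hD : ∀ z ∈ D, z < 2 ^ d) :
    D.countP (InDyadic (d + 1) 0) = D.card :=
  Multiset.countP_eq_card.2 fun z hz =>
    Nat.div_eq_of_lt ((hD z hz).trans (Nat.pow_lt_pow_succ one_lt_two))

lemma FlagsHeavy.lt_countP_inDyadic (hF : FlagsHeavy D d t F) (hD : ∀ z ∈ D, z < 2 ^ d)
    (ht : t < D.card) {x k : ℕ} (hx : x < 2 ^ d) (hk : k ≤ d) (h : FlaggedAbove F d k x) :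
    t < D.countP (InDyadic (k + 1) (x / 2 ^ (k + 1))) := by
  induction hk using Nat.decreasingInduction with
  | self =>
    rwa [Nat.div_eq_of_lt (hx.trans (Nat.pow_lt_pow_succ one_lt_two)),
      countP_inDyadic_succ_eq_card hD]
  | of_succ k hk ih =>
    have parent_heavy := ih fun m hm => h m (by omega)
    rw [pow_succ _ (k + 1), ← Nat.div_div_eq_div_mul] at parent_heavy
    exact (hF k hk _ ((Nat.div_le_self ..).trans_lt hx) parent_heavy).1 (h _ k.lt_succ_self hk)

lemma exists_mod_two_pow_of_dvd {s k : ℕ} (hs : s ≠ 0) (hk : 2 ^ k ∣ s) :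
    ∃ j, k ≤ j ∧ 2 ^ j ≤ s ∧ s % 2 ^ (j + 1) = 2 ^ j := by
  obtain ⟨j, r, hr, rfl⟩ := Nat.exists_eq_two_pow_mul_odd hs
  refine ⟨j, ?_, Nat.le_mul_of_pos_right _ hr.pos, ?_⟩
  · have hdvd : 2 ^ k ∣ 2 ^ j :=
      (Nat.Coprime.pow_left k (Nat.coprime_two_left.2 hr)).dvd_of_dvd_mul_right hk
    exact (Nat.pow_dvd_pow_iff_le_right one_lt_two).1 hdvd
  · rw [pow_succ, Nat.mul_mod_mul_left, Nat.odd_iff.1 hr, mul_one]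

/-- `s` is the midpoint of a dyadic interval of level at most `d` that contains `z`. -/
def IsMidpointAround (d s z : ℕ) : Prop :=
  ∃ j < d, s % 2 ^ (j + 1) = 2 ^ j ∧ z / 2 ^ (j + 1) = s / 2 ^ (j + 1)

lemma card_isMidpointAround_le (S : Finset ℕ) (d z : ℕ) :
    #{s ∈ S | IsMidpointAround d s z} ≤ d := by
  refine (card_le_card (t := (range d).image fun j => 2 ^ (j + 1) * (z / 2 ^ (j + 1)) + 2 ^ j)
    fun s hs => ?_).trans (card_image_le.trans_eq (card_range d))
  obtain ⟨-, j, hj, hmod, hdiv⟩ := mem_filter.1 hs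
  refine mem_image.2 ⟨j, mem_range.2 hj, ?_⟩
  rw [hdiv, ← hmod, Nat.div_add_mod]

lemma FlagsHeavy.card_cuts_mul_le (hF : FlagsHeavy D d t F) (hD : ∀ z ∈ D, z < 2 ^ d)
    (ht : t < D.card) : #(cuts F d) * (t + 1) ≤ d * D.card := by
  refine card_mul_succ_le (card_isMidpointAround_le _ d) fun s hs => ?_
  obtain ⟨hs_mem, k, hk, hflag⟩ := mem_filter.1 hs
  obtain ⟨hs_pos, hs_lt⟩ := mem_Ico.1 hs_mem
  obtain ⟨j, hkj, hj_le, hj⟩ := exists_mod_two_pow_of_dvd (by omega) hk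
  have hjd : j < d := (Nat.pow_lt_pow_iff_right one_lt_two).1 (hj_le.trans_lt hs_lt)
  have heavy := hF.lt_countP_inDyadic hD ht hs_lt hjd.le fun m hm => hflag m (hkj.trans_lt hm)
  exact heavy.trans_le (countP_le_of_imp fun z hz => ⟨j, hjd, hj, hz⟩)

lemma card_cuts_lt (F : ℕ → ℕ → Prop) (d : ℕ) : #(cuts F d) < 2 ^ d := by
  have h := card_filter_le (Ico 1 (2 ^ d)) fun s => ∃ k, 2 ^ k ∣ s ∧ FlaggedAbove F d k s
  rw [Nat.card_Ico] at h
  exact h.trans_lt (Nat.sub_lt (Nat.two_pow_pos d) one_pos)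

lemma FlaggedAbove.left_endpoint {k x : ℕ} (h : FlaggedAbove F d k x) :
    FlaggedAbove F d k (x / 2 ^ k * 2 ^ k) := by
  intro m hm hmd
  obtain ⟨r, rfl⟩ := Nat.exists_eq_add_of_le hm.le
  rw [pow_add, ← Nat.div_div_eq_div_mul, Nat.mul_div_cancel _ (Nat.two_pow_pos k),
    Nat.div_div_eq_div_mul, ← pow_add]
  exact h _ hm hmd

-- The interval is unflagged while its parent is heavy.
lemma FlagsHeavy.countP_inDyadic_le (hF : FlagsHeavy D d t F) (hD : ∀ z ∈ D, z < 2 ^ d)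
    (ht : t < D.card) {x k : ℕ} (hx : x < 2 ^ d) (hk : k < d) (h_succ : FlaggedAbove F d (k + 1) x)
    (h : ¬FlaggedAbove F d k x) : D.countP (InDyadic (k + 1) (x / 2 ^ (k + 1))) ≤ 3 * t := by
  have parent_heavy := hF.lt_countP_inDyadic hD ht hx hk h_succ
  rw [pow_succ _ (k + 1), ← Nat.div_div_eq_div_mul] at parent_heavy
  refine (hF k hk _ ((Nat.div_le_self ..).trans_lt hx) parent_heavy).2 fun h_flag => ?_
  refine h fun m hm hmd => ?_
  obtain rfl | hm' := Nat.eq_or_lt_of_le (Nat.succ_le_of_lt hm)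
  · exact h_flag
  · exact h_succ m hm' hmd

lemma FlagsHeavy.exists_cut_le (hF : FlagsHeavy D d t F) (hD : ∀ z ∈ D, z < 2 ^ d)
    (ht : t < D.card) {x : ℕ} (hx : x < 2 ^ d) :
    ∃ s ≤ x, (s = 0 ∨ s ∈ cuts F d) ∧ D.countP (fun z => s ≤ z ∧ z < x) ≤ 3 * t := by
  have top_flagged : FlaggedAbove F d d x := fun m hm hmd => absurd hm hmd.not_gt
  have h_exists : ∃ k, FlaggedAbove F d k x := ⟨d, top_flagged⟩
  obtain ⟨k, hkd, hk, hk_min⟩ :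
      ∃ k ≤ d, FlaggedAbove F d k x ∧ ∀ k' < k, ¬FlaggedAbove F d k' x :=
    ⟨Nat.find h_exists, Nat.find_min' _ top_flagged, Nat.find_spec h_exists,
      fun _ => Nat.find_min h_exists⟩
  refine ⟨x / 2 ^ k * 2 ^ k, Nat.div_mul_le_self .., ?_, ?_⟩
  · exact or_iff_not_imp_left.2 fun h_ne => mem_filter.2 ⟨mem_Ico.2 ⟨Nat.pos_of_ne_zero h_ne,
      (Nat.div_mul_le_self ..).trans_lt hx⟩, k, Nat.dvd_mul_left .., hk.left_endpoint⟩
  · cases k with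
    | zero =>
      rw [pow_zero, Nat.div_one, mul_one]
      exact (Multiset.countP_eq_zero.2 fun z _ hz => by omega).trans_le (Nat.zero_le _)
    | succ k =>
      refine (countP_le_of_imp fun z hz => ?_).trans
        (hF.countP_inDyadic_le hD ht hx hkd hk (hk_min k k.lt_succ_self))
      exact le_antisymm (Nat.div_le_div_right hz.2.le)
        ((Nat.le_div_iff_mul_le (Nat.two_pow_pos _)).2 hz.1)

end Cuts

section HeavyFlags

variable {d n t : ℕ} {η : ℝ} {D : Multiset ℕ}

/-- A cell `(m, i)` stands for the `i`-th dyadic interval of a level determined by `m`. The second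
component ranges over `Fin (2 ^ d)` at every level, so the cells of large index are empty. -/
abbrev Cell (d : ℕ) : Type := Fin d × Fin (2 ^ d)

lemma card_inDyadic_le (ℓ : Fin d → ℕ) (x : ℕ) :
    #{v : Cell d | InDyadic (ℓ v.1) v.2 x} ≤ d := by
  refine (card_le_card_of_injOn (t := univ) Prod.fst (fun _ _ => mem_coe.2 (mem_univ _))
    fun v hv w hw h => ?_).trans_eq (card_fin d)
  have hv' : x / 2 ^ ℓ v.1 = v.2 := (mem_filter.1 hv).2
  have hw' : x / 2 ^ ℓ w.1 = w.2 := (mem_filter.1 hw).2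
  exact Prod.ext h (Fin.ext (by rw [← hv', ← hw', h]))

/-- The data interval that the first round of noisy counts assigns to the cell `v`. -/
def InNode (v : Cell d) (z : ℕ) : Prop :=
  InDyadic (v.1 + 1) v.2 z

/-- The dyadic intervals, indexed as in `FlagsHeavy`, whose noisy count exceeds `2 * t`. -/
def noisyFlags (t : ℕ) (ω : Cell d → Fin (n + 1)) (m i : ℕ) : Prop :=
  ∃ v : Cell d, v.1 + 1 = m ∧ v.2 = i ∧ 2 * t < ω v

/-- The cells that are tested in `FlagsHeavy D d t`. -/
noncomputable def heavyParentCells (D : Multiset ℕ) (d t : ℕ) : Finset (Cell d) :=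
  {v | t < D.countP (InDyadic (v.1 + 2) (v.2 / 2))}

lemma card_inDyadic_parent_le (z : ℕ) :
    #{v : Cell d | InDyadic (v.1 + 2) (v.2 / 2) z} ≤ 2 * d := by
  rw [show 2 * d = #((univ : Finset (Fin d)) ×ˢ range 2) by
    rw [card_product, card_fin, card_range, mul_comm]]
  refine card_le_card_of_injOn (fun v : Cell d => (v.1, v.2.val % 2))
    (fun v _ => mem_coe.2 (mem_product.2 ⟨mem_univ _, mem_range.2 (Nat.mod_lt _ two_pos)⟩))
    fun v hv w hw h => ?_
  have hv' : z / 2 ^ (v.1.val + 2) = v.2 / 2 := (mem_filter.1 hv).2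
  have hw' : z / 2 ^ (w.1.val + 2) = w.2 / 2 := (mem_filter.1 hw).2
  obtain ⟨h_level, h_parity⟩ := Prod.ext_iff.1 h
  dsimp only at h_level h_parity
  rw [h_level] at hv'
  exact Prod.ext h_level (Fin.ext (by omega))

lemma card_heavyParentCells_mul_le (D : Multiset ℕ) (d t : ℕ) :
    #(heavyParentCells D d t) * (t + 1) ≤ 2 * d * D.card :=
  card_mul_succ_le (P := fun v : Cell d => InDyadic (v.1 + 2) (v.2 / 2))
    (fun z => (card_le_card (filter_subset_filter _ (subset_univ _))).trans
      (card_inDyadic_parent_le z)) fun _ hv => (mem_filter.1 hv).2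

lemma noisyFlags_flagsHeavy {ω : Cell d → Fin (n + 1)}
    (h : ∀ v ∈ heavyParentCells D d t, Nat.dist (ω v) (D.countP (InNode v)) ≤ t) :
    FlagsHeavy D d t (noisyFlags t ω) := by
  intro m hm i hi h_parent
  have h_dist := h (⟨m, hm⟩, ⟨i, hi⟩) (mem_filter.2 ⟨mem_univ _, h_parent⟩)
  change Nat.dist _ (D.countP (InDyadic (m + 1) i)) ≤ t at h_dist
  rw [Nat.dist] at h_dist
  constructor
  · rintro ⟨v, h_level, h_index, h_flag⟩
    obtain rfl : v = (⟨m, hm⟩, ⟨i, hi⟩) :=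
      Prod.ext (Fin.ext (Nat.succ_injective h_level)) (Fin.ext h_index)
    omega
  · intro h_flag
    have h_le : (ω (⟨m, hm⟩, ⟨i, hi⟩) : ℕ) ≤ 2 * t := by
      by_contra! h_lt
      exact h_flag ⟨_, rfl, rfl, h_lt⟩
    omega

lemma noisyCounts_not_flagsHeavy_le (hη : 0 ≤ η) (hD : D.card ≤ n) :
    (noisyCounts n η InNode D).toOuterMeasure
        {ω : Cell d → Fin (n + 1) | ¬FlagsHeavy D d t (noisyFlags t ω)} ≤
      #(heavyParentCells D d t) * 3 * ENNReal.ofReal (Real.exp (-(η / 2 * (t + 1 : ℕ)))) := by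
  refine (MeasureTheory.measure_mono fun ω hω => ?_).trans
    ((noisyCounts_exists_totalError_ge_le hη InNode hD (heavyParentCells D d t)
      (fun v => {v}) (t + 1)).trans_eq ?_)
  · by_contra h
    refine hω (noisyFlags_flagsHeavy fun v hv => ?_)
    by_contra! h_lt
    exact h ⟨v, hv, by rwa [totalError, sum_singleton]⟩
  · simp only [card_singleton, pow_one, sum_const, nsmul_eq_mul]

end HeavyFlags

section PrefixCounts

variable {d n t : ℕ} {η : ℝ} {S : Finset ℕ}

/-- The number of cuts up to `x`. -/
noncomputable def cutRank (S : Finset ℕ) (x : ℕ) : ℕ :=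
  #{s ∈ S | s ≤ x}

lemma cutRank_mono (S : Finset ℕ) : Monotone (cutRank S) := fun _ _ h =>
  card_le_card (monotone_filter_right S fun _ _ hs => hs.trans h)

lemma cutRank_le_card (S : Finset ℕ) (x : ℕ) : cutRank S x ≤ #S :=
  card_filter_le ..

lemma cutRank_lt_cutRank {s x z : ℕ} (hs : s ∈ S) (hzs : z < s) (hsx : s ≤ x) :
    cutRank S z < cutRank S x := by
  refine card_lt_card (Finset.ssubset_iff_subset_ne.2
    ⟨monotone_filter_right S fun _ _ h => h.trans (hzs.le.trans hsx), fun h => ?_⟩)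
  have h_mem : s ∈ ({s ∈ S | s ≤ z} : Finset ℕ) := h ▸ mem_filter.2 ⟨hs, hsx⟩
  exact hzs.not_ge (mem_filter.1 h_mem).2

/-- The cells whose dyadic intervals partition the initial segment `{0, …, j - 1}`: one for each
binary digit `1` of `j`. -/
noncomputable def prefixCells (d j : ℕ) : Finset (Cell d) :=
  {v | v.2 + 1 = j / 2 ^ v.1.val ∧ Even v.2.val}

lemma three_pow_card_prefixCells_le (d j : ℕ) : 3 ^ #(prefixCells d j) ≤ 4 * (j + 1) ^ 2 := by
  have card_le : #(prefixCells d j) ≤ Nat.log 2 j + 1 := by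
    rw [← card_range (Nat.log 2 j + 1)]
    refine card_le_card_of_injOn (fun v => v.1) (fun v hv => ?_) fun v hv w hw h => ?_
    · obtain ⟨hv', -⟩ := (mem_filter.1 hv).2
      have h_pos : 0 < j / 2 ^ v.1.val := hv' ▸ Nat.succ_pos _
      exact mem_coe.2 (mem_range.2 (Nat.lt_succ_of_le
        (Nat.le_log_of_pow_le one_lt_two (Nat.div_pos_iff.1 h_pos).2)))
    · obtain ⟨hv', -⟩ := (mem_filter.1 hv).2
      obtain ⟨hw', -⟩ := (mem_filter.1 hw).2
      dsimp only at h
      rw [h, ← hw'] at hv'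
      exact Prod.ext (Fin.ext h) (Fin.ext (Nat.succ_injective hv'))
  calc 3 ^ #(prefixCells d j) ≤ 4 ^ (Nat.log 2 j + 1) :=
        (Nat.pow_le_pow_left (by norm_num) _).trans (Nat.pow_le_pow_right (by norm_num) card_le)
    _ = 4 * (2 ^ Nat.log 2 j) ^ 2 := by rw [pow_succ', pow_right_comm]; norm_num
    _ ≤ 4 * (j + 1) ^ 2 := by gcongr; exact Nat.pow_log_le_add_one 2 j

lemma ite_lt_eq_sum_range (r j d : ℕ) :
    (if r < j then 1 else 0) =
      (∑ l ∈ range d, if r / 2 ^ l + 1 = j / 2 ^ l ∧ Even (r / 2 ^ l) then 1 else 0) +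
        if r / 2 ^ d < j / 2 ^ d then 1 else 0 := by
  induction d with
  | zero => simp only [range_zero, sum_empty, pow_zero, Nat.div_one, zero_add]
  | succ d ih =>
    rw [ih, sum_range_succ, add_assoc, pow_succ, ← Nat.div_div_eq_div_mul,
      ← Nat.div_div_eq_div_mul]
    generalize r / 2 ^ d = a, j / 2 ^ d = b
    congr 1
    simp only [Nat.even_iff]
    split_ifs <;> omega

lemma card_filter_prefixCells_inDyadic {j : ℕ} (hj : j < 2 ^ d) (r : ℕ) :
    #{v ∈ prefixCells d j | InDyadic v.1 v.2 r} = if r < j then 1 else 0 := by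
  rw [ite_lt_eq_sum_range r j d, Nat.div_eq_of_lt hj, if_neg (Nat.not_lt_zero _), add_zero,
    sum_range, prefixCells, filter_filter, card_filter, Fintype.sum_prod_type]
  refine sum_congr rfl fun l _ => ?_
  by_cases h : r / 2 ^ l.val + 1 = j / 2 ^ l.val ∧ Even (r / 2 ^ l.val)
  · have h_lt : r / 2 ^ l.val < 2 ^ d :=
      (Nat.lt_of_succ_le (h.1.trans_le (Nat.div_le_self ..))).trans hj
    rw [if_pos h, sum_eq_single ⟨r / 2 ^ l.val, h_lt⟩, if_pos ⟨h, rfl⟩]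
    · exact fun i _ hi => if_neg fun hi' => hi (Fin.ext hi'.2.symm)
    · exact fun h_mem => absurd (mem_univ _) h_mem
  · rw [if_neg h]
    refine sum_eq_zero fun i _ => if_neg ?_
    rintro ⟨hi, hir⟩
    exact h (hir ▸ hi)

lemma countP_lt_eq_sum_prefixCells {X : Type*} {j : ℕ} (hj : j < 2 ^ d) (r : X → ℕ)
    (D : Multiset X) :
    D.countP (fun z => r z < j) =
      ∑ v ∈ prefixCells d j, D.countP fun z => InDyadic v.1 v.2 (r z) := by
  induction D using Multiset.induction with
  | empty => simp only [Multiset.countP_zero, sum_const_zero]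
  | cons a D ih =>
    simp only [Multiset.countP_cons, sum_add_distrib]
    rw [ih, ← card_filter_prefixCells_inDyadic hj, card_filter]

/-- The interval of cut ranks that the second round of noisy counts assigns to the cell `v`. -/
def InRankInterval (S : Finset ℕ) (v : Cell d) (z : ℕ) : Prop :=
  InDyadic v.1 v.2 (cutRank S z)

/-- The estimate, from the noisy counts `ω` of the rank intervals, of the number of elements of the
database below `x`. -/
noncomputable def prefixEstimate (S : Finset ℕ) (ω : Cell d → Fin (n + 1)) (x : ℕ) : ℕ :=
  ∑ v ∈ prefixCells d (cutRank S x), ω v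

lemma dist_sum_le {ι : Type*} (s : Finset ι) (f g : ι → ℕ) :
    Nat.dist (∑ i ∈ s, f i) (∑ i ∈ s, g i) ≤ ∑ i ∈ s, Nat.dist (f i) (g i) := by
  have h₁ : ∑ i ∈ s, f i ≤ ∑ i ∈ s, Nat.dist (f i) (g i) + ∑ i ∈ s, g i := by
    rw [← sum_add_distrib]
    exact sum_le_sum fun i _ => Nat.dist_tri_left' ..
  have h₂ : ∑ i ∈ s, g i ≤ ∑ i ∈ s, Nat.dist (f i) (g i) + ∑ i ∈ s, f i := by
    rw [← sum_add_distrib]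
    exact sum_le_sum fun i _ => Nat.dist_tri_left ..
  rw [Nat.dist]
  omega

lemma dist_prefixEstimate_le (hS : #S < 2 ^ d) (D : Multiset ℕ) (ω : Cell d → Fin (n + 1))
    {s x : ℕ} (hsx : s ≤ x) (hs : s = 0 ∨ s ∈ S) :
    Nat.dist (prefixEstimate S ω x) (D.countP (· < x)) ≤
      totalError (InRankInterval S) D ω (prefixCells d (cutRank S x)) +
        D.countP fun z => s ≤ z ∧ z < x := by
  have rank_error : Nat.dist (prefixEstimate S ω x)
      (D.countP fun z => cutRank S z < cutRank S x) ≤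
        totalError (InRankInterval S) D ω (prefixCells d (cutRank S x)) := by
    rw [countP_lt_eq_sum_prefixCells ((cutRank_le_card S x).trans_lt hS)]
    exact dist_sum_le ..
  have lower : D.countP (fun z => cutRank S z < cutRank S x) ≤ D.countP (· < x) :=
    countP_le_of_imp fun z hz => (cutRank_mono S).reflect_lt hz
  have upper : D.countP (· < x) ≤
      D.countP (fun z => cutRank S z < cutRank S x) + D.countP fun z => s ≤ z ∧ z < x := by
    refine countP_le_add fun z hz => or_iff_not_imp_right.2 fun h => ?_
    have hzs : z < s := by omega
    exact cutRank_lt_cutRank (hs.resolve_left (by omega)) hzs hsx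
  rw [Nat.dist] at rank_error ⊢
  omega

lemma noisyCounts_exists_prefix_error_le (hη : 0 ≤ η) {D : Multiset ℕ} (hD : D.card ≤ n)
    {N : ℕ} (hN : #S ≤ N) :
    (noisyCounts n η (InRankInterval S) D).toOuterMeasure {ω : Cell d → Fin (n + 1) |
        ∃ x, t < totalError (InRankInterval S) D ω (prefixCells d (cutRank S x))} ≤
      4 * (N + 1) ^ 3 * ENNReal.ofReal (Real.exp (-(η / 2 * (t + 1 : ℕ)))) := by
  refine (MeasureTheory.measure_mono ?_).trans
    ((noisyCounts_exists_totalError_ge_le hη (InRankInterval S) hD (range (N + 1))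
      (prefixCells d) (t + 1)).trans ?_)
  · rintro ω ⟨x, hx⟩
    exact ⟨_, mem_range.2 (Nat.lt_succ_of_le ((cutRank_le_card S x).trans hN)), hx⟩
  · gcongr
    have sum_le : ∑ j ∈ range (N + 1), 3 ^ #(prefixCells d j) ≤ (N + 1) * (4 * (N + 1) ^ 2) := by
      refine (sum_le_card_nsmul _ _ _ fun j hj => ?_).trans_eq
        (by rw [card_range, nsmul_eq_mul, Nat.cast_id])
      have : j < N + 1 := mem_range.1 hj
      exact (three_pow_card_prefixCells_le d j).trans (by gcongr; omega)
    rw [show (4 * (N + 1) ^ 3 : ℝ≥0∞) = ((N + 1) * (4 * (N + 1) ^ 2) : ℕ) by push_cast; ring]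
    exact_mod_cast sum_le

end PrefixCounts

section Reconstruction

variable {d n e : ℕ} {E : ℕ → ℕ} {D D' : Multiset ℕ}

/-- `D` is a database over the domain `{1, …, 2 ^ d}`. -/
def IsDatabase (d : ℕ) (D : Multiset ℕ) : Prop :=
  D ≠ 0 ∧ ∀ x ∈ D, 1 ≤ x ∧ x ≤ 2 ^ d

/-- `D'` answers every interval query over `{1, …, 2 ^ d}` as `D` does, up to `α`. -/
def IntervalClose (d : ℕ) (α : ℝ) (D D' : Multiset ℕ) : Prop :=
  ∀ a b : ℕ, 1 ≤ a → a ≤ b → b ≤ 2 ^ d → |iquery a b D' - iquery a b D| ≤ α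

/-- `D` is a database of size `n` whose prefix counts agree with `E` up to `e`. -/
def Fits (d n e : ℕ) (E : ℕ → ℕ) (D : Multiset ℕ) : Prop :=
  IsDatabase d D ∧ D.card = n ∧ ∀ x < 2 ^ d, Nat.dist (E x) (D.countP (· ≤ x)) ≤ e

/-- Some database of size `n` that fits the estimated prefix counts `E` up to `e`, and a fixed
database if there is none. -/
noncomputable def reconstruct (d n e : ℕ) (E : ℕ → ℕ) : Multiset ℕ :=
  if h : ∃ D, Fits d n e E D then h.choose else {1}

lemma Fits.reconstruct (hD : Fits d n e E D) : Fits d n e E (reconstruct d n e E) := by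
  have h : ∃ D, Fits d n e E D := ⟨D, hD⟩
  rw [_root_.reconstruct, dif_pos h]
  exact h.choose_spec

lemma isDatabase_reconstruct (d n e : ℕ) (E : ℕ → ℕ) : IsDatabase d (reconstruct d n e E) := by
  by_cases h : ∃ D, Fits d n e E D
  · obtain ⟨D, hD⟩ := h
    exact hD.reconstruct.1
  · rw [reconstruct, dif_neg h]
    refine ⟨Multiset.singleton_ne_zero 1, fun x hx => ?_⟩
    rw [Multiset.mem_singleton.1 hx]
    exact ⟨le_rfl, Nat.one_le_two_pow⟩

lemma Fits.dist_countP_le (hD : Fits d n e E D) (hD' : Fits d n e E D') {x : ℕ}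
    (hx : x ≤ 2 ^ d) : Nat.dist (D'.countP (· ≤ x)) (D.countP (· ≤ x)) ≤ 2 * e := by
  obtain ⟨⟨-, hD_dom⟩, hD_card, hD_fit⟩ := hD
  obtain ⟨⟨-, hD'_dom⟩, hD'_card, hD'_fit⟩ := hD'
  obtain hx | rfl := hx.lt_or_eq
  · have h := hD_fit x hx
    have h' := hD'_fit x hx
    rw [Nat.dist] at h h' ⊢
    omega
  · rw [Multiset.countP_eq_card.2 fun z hz => (hD_dom z hz).2,
      Multiset.countP_eq_card.2 fun z hz => (hD'_dom z hz).2, hD_card, hD'_card, Nat.dist_self]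
    exact Nat.zero_le _

lemma countP_interval_add (D : Multiset ℕ) {a b : ℕ} (ha : 1 ≤ a) (hab : a ≤ b) :
    D.countP (fun x => a ≤ x ∧ x ≤ b) + D.countP (· ≤ a - 1) = D.countP (· ≤ b) := by
  induction D using Multiset.induction with
  | empty => rfl
  | cons x D ih =>
    simp only [Multiset.countP_cons]
    split_ifs <;> omega

lemma Fits.intervalClose (hD : Fits d n e E D) (hD' : Fits d n e E D') {α : ℝ}
    (hα : 4 * e ≤ α * n) : IntervalClose d α D D' := by
  intro a b ha hab hb
  have count_dist : Nat.dist (D'.countP fun x => a ≤ x ∧ x ≤ b)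
      (D.countP fun x => a ≤ x ∧ x ≤ b) ≤ 4 * e := by
    have hb_dist := hD.dist_countP_le hD' hb
    have ha_dist := hD.dist_countP_le hD' (show a - 1 ≤ 2 ^ d by omega)
    rw [← countP_interval_add D ha hab, ← countP_interval_add D' ha hab] at hb_dist
    rw [Nat.dist] at hb_dist ha_dist ⊢
    omega
  have hn : (0 : ℝ) < n := by
    rw [← hD.2.1]
    exact_mod_cast Multiset.card_pos.2 hD.1.1
  rw [Nat.dist] at count_dist
  rw [iquery, iquery, hD.2.1, hD'.2.1, ← Multiset.countP_eq_card_filter,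
    ← Multiset.countP_eq_card_filter, ← sub_div, abs_div, abs_of_pos hn, div_le_iff₀ hn]
  refine le_trans (abs_sub_le_iff.2 ⟨?_, ?_⟩) hα
  · rw [sub_le_iff_le_add]
    exact_mod_cast (by omega)
  · rw [sub_le_iff_le_add]
    exact_mod_cast (by omega)

lemma countP_map_pred_lt (hD : IsDatabase d D) (x : ℕ) :
    (D.map Nat.pred).countP (· < x) = D.countP (· ≤ x) := by
  rw [Multiset.countP_map, ← Multiset.countP_eq_card_filter]
  refine Multiset.countP_congr rfl fun z hz => propext ?_
  have := (hD.2 z hz).1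
  rw [Nat.pred_eq_sub_one]
  omega

lemma map_pred_lt (hD : IsDatabase d D) : ∀ z ∈ D.map Nat.pred, z < 2 ^ d := by
  intro z hz
  obtain ⟨x, hx, rfl⟩ := Multiset.mem_map.1 hz
  have := hD.2 x hx
  rw [Nat.pred_eq_sub_one]
  omega

end Reconstruction

section Mechanism

variable {d n t N : ℕ} {η : ℝ} {D : Multiset ℕ}

/-- The second round: given the cuts, publish a database reconstructed from noisy counts of the
dyadic intervals of cut ranks. -/
noncomputable def releaseFromCuts (d n t : ℕ) (η : ℝ) (S : Finset ℕ) (D : Multiset ℕ) :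
    PMF (Multiset ℕ) :=
  (noisyCounts n η (InRankInterval S) D).map fun ω : Cell d → Fin (n + 1) =>
    reconstruct d n (4 * t) (prefixEstimate S ω)

/-- The two-round mechanism: choose the cuts from noisy counts of dyadic intervals, then release a
database from them. The data are shifted to start at `0`. -/
noncomputable def intervalMechanism (d n t : ℕ) (η : ℝ) (D : Multiset ℕ) : PMF (Multiset ℕ) :=
  (noisyCounts n η InNode (D.map Nat.pred)).bind fun ω : Cell d → Fin (n + 1) =>
    releaseFromCuts d n t η (cuts (noisyFlags t ω) d) (D.map Nat.pred)

lemma intervalMechanism_pureDP (hη : 0 ≤ η) : PureDP (8 * d * η) (intervalMechanism d n t η) := by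
  have first_round : PureDP (4 * d * η) (noisyCounts n η (InNode (d := d))) :=
    noisyCounts_pureDP hη (card_inDyadic_le fun l => l + 1)
  have second_round (S : Finset ℕ) : PureDP (4 * d * η) (releaseFromCuts d n t η S) :=
    (noisyCounts_pureDP hη fun z => card_inDyadic_le _ (cutRank S z)).map _
  rw [show 8 * d * η = 4 * d * η + 4 * d * η by ring]
  exact (first_round.bind fun ω => second_round _).comp_map Nat.pred

lemma isDatabase_of_mem_support_intervalMechanism {D' : Multiset ℕ}
    (h : D' ∈ (intervalMechanism d n t η D).support) : IsDatabase d D' := by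
  obtain ⟨_, -, h⟩ := (PMF.mem_support_bind_iff ..).1 h
  obtain ⟨_, -, rfl⟩ := (PMF.mem_support_map_iff ..).1 h
  exact isDatabase_reconstruct ..

lemma fits_prefixEstimate {F : ℕ → ℕ → Prop} (hD : IsDatabase d D) (hn : D.card = n) (ht : t < n)
    (hF : FlagsHeavy (D.map Nat.pred) d t F) {ω : Cell d → Fin (n + 1)}
    (hω : ∀ x, totalError (InRankInterval (cuts F d)) (D.map Nat.pred) ω
      (prefixCells d (cutRank (cuts F d) x)) ≤ t) :
    Fits d n (4 * t) (prefixEstimate (cuts F d) ω) D := by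
  refine ⟨hD, hn, fun x hx => ?_⟩
  obtain ⟨s, hsx, hs, gap⟩ := hF.exists_cut_le (map_pred_lt hD) (by rwa [Multiset.card_map, hn]) hx
  have error := dist_prefixEstimate_le (card_cuts_lt F d) (D.map Nat.pred) ω hsx hs
  rw [countP_map_pred_lt hD] at error
  linarith [hω x]

lemma releaseFromCuts_not_intervalClose_le (hη : 0 ≤ η) {α : ℝ} (hα : 16 * t ≤ α * n)
    {F : ℕ → ℕ → Prop} (hD : IsDatabase d D) (hn : D.card = n) (ht : t < n)
    (hN : d * n ≤ N * (t + 1)) (hF : FlagsHeavy (D.map Nat.pred) d t F) :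
    (releaseFromCuts d n t η (cuts F d) (D.map Nat.pred)).toOuterMeasure
        {D' | ¬IntervalClose d α D D'} ≤
      4 * (N + 1) ^ 3 * ENNReal.ofReal (Real.exp (-(η / 2 * (t + 1 : ℕ)))) := by
  have hn' : (D.map Nat.pred).card = n := by rw [Multiset.card_map, hn]
  have hS : #(cuts F d) ≤ N := by
    have h := hF.card_cuts_mul_le (map_pred_lt hD) (ht.trans_eq hn'.symm)
    rw [hn'] at h
    exact Nat.le_of_mul_le_mul_right (h.trans hN) t.succ_pos
  rw [releaseFromCuts, PMF.toOuterMeasure_map_apply]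
  refine (MeasureTheory.measure_mono fun ω hω => ?_).trans
    (noisyCounts_exists_prefix_error_le hη hn'.le hS)
  by_contra h
  refine hω ?_
  have fits : Fits d n (4 * t) (prefixEstimate (cuts F d) ω) D :=
    fits_prefixEstimate hD hn ht hF fun x => not_lt.1 fun hx => h ⟨x, hx⟩
  exact fits.intervalClose fits.reconstruct (by push_cast; linarith)

lemma intervalMechanism_not_intervalClose_le (hη : 0 ≤ η) {α : ℝ} (hα : 16 * t ≤ α * n)
    (hD : IsDatabase d D) (hn : D.card = n) (ht : t < n) (hN : d * n ≤ N * (t + 1)) :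
    (intervalMechanism d n t η D).toOuterMeasure {D' | ¬IntervalClose d α D D'} ≤
      10 * (N + 1) ^ 3 * ENNReal.ofReal (Real.exp (-(η / 2 * (t + 1 : ℕ)))) := by
  have hn' : (D.map Nat.pred).card = n := by rw [Multiset.card_map, hn]
  have card_le : #(heavyParentCells (D.map Nat.pred) d t) ≤ 2 * N := by
    have h := card_heavyParentCells_mul_le (D.map Nat.pred) d t
    rw [hn'] at h
    exact Nat.le_of_mul_le_mul_right (by linarith) t.succ_pos
  have count_le : (#(heavyParentCells (D.map Nat.pred) d t) * 3 + 4 * (N + 1) ^ 3 : ℝ≥0∞) ≤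
      10 * (N + 1) ^ 3 := by
    have h : #(heavyParentCells (D.map Nat.pred) d t) * 3 + 4 * (N + 1) ^ 3 ≤
        10 * (N + 1) ^ 3 := by
      linarith [Nat.le_self_pow three_ne_zero (N + 1)]
    exact_mod_cast h
  refine (toOuterMeasure_bind_le _ _ _ _ (noisyCounts_not_flagsHeavy_le hη hn'.le) fun ω hω =>
    releaseFromCuts_not_intervalClose_le hη hα hD hn ht hN (not_not.1 hω)).trans ?_
  rw [← add_mul]
  gcongr

end Mechanism

lemma ten_mul_pow_mul_exp_le {δ w B x : ℝ} (hδ₀ : 0 ≤ δ) (hδ₁ : δ ≤ 1) (hw : 2 ≤ w) (hB₀ : 0 ≤ B)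
    (hB : B ≤ 18 * (δ * w)) (hx : 20 * Real.log w ≤ x) : 10 * B ^ 3 * Real.exp (-x) ≤ δ := by
  have exp_le : Real.exp (-x) ≤ (w ^ 20)⁻¹ := by
    rw [Real.exp_neg]
    gcongr
    rw [← Real.exp_log (show 0 < w ^ 20 by positivity), Real.log_pow]
    exact Real.exp_le_exp.2 (by exact_mod_cast hx)
  have pow_ge : (10 * 18 ^ 3 : ℝ) ≤ w ^ 17 :=
    (show (10 * 18 ^ 3 : ℝ) ≤ 2 ^ 17 by norm_num).trans (by gcongr)
  calc 10 * B ^ 3 * Real.exp (-x) ≤ 10 * (18 * (δ * w)) ^ 3 * (w ^ 20)⁻¹ := by gcongr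
    _ = δ ^ 3 * (10 * 18 ^ 3 / w ^ 17) := by field_simp
    _ ≤ δ ^ 3 * 1 := by gcongr; exact div_le_one_of_le₀ pow_ge (by positivity)
    _ ≤ δ := by rw [mul_one]; exact pow_le_of_le_one hδ₀ hδ₁ three_ne_zero

section Accuracy

variable {d n : ℕ} {ε α δ : ℝ}

lemma mul_le_ceil_mul_floor_add_one (hα : 0 < α) (d n : ℕ) :
    d * n ≤ ⌈16 * d / α⌉₊ * (⌊α * n / 16⌋₊ + 1) := by
  have h : (d * n : ℝ) ≤ ⌈16 * d / α⌉₊ * (⌊α * n / 16⌋₊ + 1) :=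
    calc (d * n : ℝ) = 16 * d / α * (α * n / 16) := by field_simp
      _ ≤ ⌈16 * d / α⌉₊ * (⌊α * n / 16⌋₊ + 1) := by
        gcongr
        · exact Nat.le_ceil _
        · exact (Nat.lt_floor_add_one _).le
  exact_mod_cast h

lemma log_le_rate_mul_floor_add_one {w : ℝ} (hd : 1 ≤ d) (hε : 0 < ε) (hα : 0 < α)
    (hn : 5120 * d / (ε * α) * Real.log w ≤ n) :
    20 * Real.log w ≤ ε / (8 * d) / 2 * (⌊α * n / 16⌋₊ + 1 : ℕ) := by
  have : (0 : ℝ) < d := by exact_mod_cast hd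
  calc 20 * Real.log w
      = ε / (8 * d) / 2 * (α * (5120 * d / (ε * α) * Real.log w) / 16) := by field_simp; ring
    _ ≤ ε / (8 * d) / 2 * (α * n / 16) := by gcongr
    _ ≤ ε / (8 * d) / 2 * (⌊α * n / 16⌋₊ + 1 : ℕ) := by
      gcongr
      push_cast
      exact (Nat.lt_floor_add_one _).le

lemma ceil_add_one_le (hd : 1 ≤ d) (hα₀ : 0 < α) (hα₁ : α ≤ 1) :
    (⌈16 * d / α⌉₊ + 1 : ℝ) ≤ 18 * (d / α) := by
  have hd₁ : (1 : ℝ) ≤ d := by exact_mod_cast hd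
  have one_le : 1 ≤ d / α := (one_le_div hα₀).2 (hα₁.trans hd₁)
  have h := Nat.ceil_lt_add_one (show 0 ≤ 16 * d / α by positivity)
  linarith [mul_div_assoc 16 (d : ℝ) α]

lemma intervalMechanism_pureDP_div (hd : 1 ≤ d) (hε : 0 ≤ ε) (t : ℕ) :
    PureDP ε (intervalMechanism d n t (ε / (8 * d))) := by
  have h := intervalMechanism_pureDP (d := d) (n := n) (t := t)
    (show 0 ≤ ε / (8 * d) by positivity)
  rwa [mul_div_cancel₀ ε (by positivity)] at h

lemma intervalMechanism_useful (hd : 1 ≤ d) (hε : 0 < ε) (hα₀ : 0 < α) (hα₁ : α < 1) (hδ₀ : 0 < δ)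
    (hδ₁ : δ ≤ 1) (hw : 2 ≤ d / (δ * α))
    (hn : 5120 * d / (ε * α) * Real.log (d / (δ * α)) ≤ n) {D : Multiset ℕ} (hD : IsDatabase d D)
    (hDn : D.card = n) :
    1 - ENNReal.ofReal δ ≤ (intervalMechanism d n ⌊α * n / 16⌋₊ (ε / (8 * d)) D).toOuterMeasure
      {D' | IntervalClose d α D D'} := by
  have hn₀ : (0 : ℝ) < n := by
    rw [← hDn]
    exact_mod_cast Multiset.card_pos.2 hD.1
  have floor_le : (⌊α * n / 16⌋₊ : ℝ) ≤ α * n / 16 := Nat.floor_le (by positivity)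
  have floor_lt : ⌊α * n / 16⌋₊ < n := by
    have : (⌊α * n / 16⌋₊ : ℝ) < n := by nlinarith
    exact_mod_cast this
  have ceil_le : (⌈16 * d / α⌉₊ + 1 : ℝ) ≤ 18 * (δ * (d / (δ * α))) := by
    rw [show δ * (d / (δ * α)) = d / α by field_simp]
    exact ceil_add_one_le hd hα₀ hα₁.le
  have failure := intervalMechanism_not_intervalClose_le (η := ε / (8 * d)) (by positivity)
    (show 16 * (⌊α * n / 16⌋₊ : ℝ) ≤ α * n by linarith) hD hDn floor_lt
    (mul_le_ceil_mul_floor_add_one hα₀ d n)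
  have failure_le : (10 * (⌈16 * d / α⌉₊ + 1) ^ 3 * ENNReal.ofReal
      (Real.exp (-(ε / (8 * d) / 2 * (⌊α * n / 16⌋₊ + 1 : ℕ)))) : ℝ≥0∞) ≤ ENNReal.ofReal δ := by
    have h := ten_mul_pow_mul_exp_le hδ₀.le hδ₁ hw (by positivity) ceil_le
      (log_le_rate_mul_floor_add_one hd hε hα₀ hn)
    refine le_trans (le_of_eq ?_) (ENNReal.ofReal_le_ofReal h)
    rw [ENNReal.ofReal_mul (by positivity)]
    congr 1
    exact_mod_cast (ENNReal.ofReal_natCast (10 * (⌈16 * d / α⌉₊ + 1) ^ 3)).symm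
  rw [tsub_le_iff_right]
  exact (one_le_toOuterMeasure_add_compl _ _).trans (by gcongr; exact failure.trans failure_le)

lemma eq_one_and_half_le_of_div_lt_two (hd : 1 ≤ d) (hα₀ : 0 < α) (hα₁ : α ≤ 1) (hδ₀ : 0 < δ)
    (hδ₁ : δ ≤ 1) (h : d / (δ * α) < 2) : d = 1 ∧ 1 / 2 ≤ α := by
  have d_lt : (d : ℝ) < 2 * (δ * α) := (div_lt_iff₀ (by positivity)).1 h
  have one_le : (1 : ℝ) ≤ d := by exact_mod_cast hd
  have lt_two : (d : ℝ) < 2 := by nlinarith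
  exact ⟨le_antisymm (Nat.lt_succ_iff.1 (by exact_mod_cast lt_two)) hd, by nlinarith⟩

end Accuracy

lemma iquery_nonneg (a b : ℕ) (D : Multiset ℕ) : 0 ≤ iquery a b D := by
  unfold iquery
  positivity

lemma iquery_le_one (a b : ℕ) (D : Multiset ℕ) : iquery a b D ≤ 1 :=
  div_le_one_of_le₀ (by exact_mod_cast Multiset.card_le_card (Multiset.filter_le _ _))
    (Nat.cast_nonneg _)

lemma iquery_eq_one {a b : ℕ} {D : Multiset ℕ} (hD₀ : D ≠ 0) (hD : ∀ x ∈ D, a ≤ x ∧ x ≤ b) :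
    iquery a b D = 1 := by
  rw [iquery, Multiset.filter_eq_self.2 hD]
  exact div_self (by exact_mod_cast (Multiset.card_pos.2 hD₀).ne')

lemma isDatabase_pair : IsDatabase 1 {1, 2} :=
  ⟨Multiset.cons_ne_zero, by decide⟩

lemma iquery_pair_self {x : ℕ} (hx : x = 1 ∨ x = 2) : iquery x x {1, 2} = 1 / 2 := by
  rw [iquery, ← Multiset.countP_eq_card_filter]
  rcases hx with rfl | rfl <;>
    norm_num [Multiset.insert_eq_cons, Multiset.countP_cons, ← Multiset.cons_zero]

lemma intervalClose_pair {α : ℝ} (hα : 1 / 2 ≤ α) {D : Multiset ℕ} (hD : IsDatabase 1 D) :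
    IntervalClose 1 α D {1, 2} := by
  intro a b ha hab hb
  obtain ⟨rfl, rfl⟩ | ⟨rfl, hx⟩ : (a = 1 ∧ b = 2 ^ 1) ∨ (a = b ∧ (b = 1 ∨ b = 2)) := by omega
  · rw [iquery_eq_one isDatabase_pair.1 isDatabase_pair.2, iquery_eq_one hD.1 hD.2, sub_self,
      abs_zero]
    linarith
  · rw [iquery_pair_self hx, abs_le]
    constructor <;> linarith [iquery_nonneg a a D, iquery_le_one a a D]

lemma pure_pair_useful {α : ℝ} (hα : 1 / 2 ≤ α) (δ : ℝ) {D : Multiset ℕ} (hD : IsDatabase 1 D) :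
    1 - ENNReal.ofReal δ ≤
      (PMF.pure {1, 2} : PMF (Multiset ℕ)).toOuterMeasure {D' | IntervalClose 1 α D D'} := by
  rw [PMF.toOuterMeasure_pure_apply, if_pos (Set.mem_ofPred.2 (intervalClose_pair hα hD))]
  exact tsub_le_self

theorem stmt10 :
    ∃ c : ℝ, 0 < c ∧
      ∀ d : ℕ, 1 ≤ d → ∀ ε α δ : ℝ, 0 < ε → 0 < α → α < 1 → 0 < δ → δ < 1 →
      ∀ n : ℕ, (n : ℝ) ≥ c * d / (ε * α) * Real.log (d / (δ * α)) →
      ∃ M : Multiset ℕ → PMF (Multiset ℕ),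
        -- M is ε-differentially private on size-n databases over {1,…,2^d}
        (∀ D D'' : Multiset ℕ, D.card = n → D''.card = n →
          (∀ x ∈ D, 1 ≤ x ∧ x ≤ 2 ^ d) → (∀ x ∈ D'', 1 ≤ x ∧ x ≤ 2 ^ d) →
          Neighbor D D'' →
          ∀ E : Set (Multiset ℕ),
            (M D).toOuterMeasure E ≤
              ENNReal.ofReal (Real.exp ε) * (M D'').toOuterMeasure E) ∧
        -- M outputs databases over {1,…,2^d}
        (∀ D : Multiset ℕ, ∀ Dhat ∈ (M D).support, Dhat ≠ 0 ∧ ∀ x ∈ Dhat, 1 ≤ x ∧ x ≤ 2 ^ d) ∧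
        -- M is (α, δ)-useful for all interval queries Q_{[a,b]} with 1 ≤ a ≤ b ≤ 2^d
        (∀ D : Multiset ℕ, D.card = n → D ≠ 0 → (∀ x ∈ D, 1 ≤ x ∧ x ≤ 2 ^ d) →
          1 - ENNReal.ofReal δ ≤
            (M D).toOuterMeasure {Dhat | ∀ a b : ℕ, 1 ≤ a → a ≤ b → b ≤ 2 ^ d →
              |iquery a b Dhat - iquery a b D| ≤ α}) := by
  refine ⟨5120, by norm_num, fun d hd ε α δ hε hα₀ hα₁ hδ₀ hδ₁ n hn => ?_⟩
  obtain hw | hw := le_or_gt 2 (d / (δ * α))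
  · exact ⟨intervalMechanism d n ⌊α * n / 16⌋₊ (ε / (8 * d)),
      fun _ _ _ _ _ _ h => (intervalMechanism_pureDP_div hd hε.le _).toOuterMeasure_le h,
      fun _ _ => isDatabase_of_mem_support_intervalMechanism,
      fun _ hDn hD₀ hD => intervalMechanism_useful hd hε hα₀ hα₁ hδ₀ hδ₁.le hw hn ⟨hD₀, hD⟩ hDn⟩
  · obtain ⟨rfl, hα⟩ := eq_one_and_half_le_of_div_lt_two hd hα₀ hα₁.le hδ₀ hδ₁.le hw
    exact ⟨fun _ => PMF.pure {1, 2},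
      fun _ _ _ _ _ _ h => (PureDP.const hε.le _).toOuterMeasure_le h,
      fun _ _ hD' => (PMF.mem_support_pure_iff ..).1 hD' ▸ isDatabase_pair,
      fun _ _ hD₀ hD => pure_pair_useful hα δ ⟨hD₀, hD⟩⟩
end
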